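/- arXiv:math/0611488 — 2 statements merged into one kernel-verified Lean document; each statement's English description precedes it below -/
import Mathlib

section
/- Suppose every homogeneous ideal of k[x_1,...,x_{n−1}] containing a regular sequence of degrees a_1,...,a_r has the same Hilbert function as an ideal containing x_1^{a_1},...,x_r^{a_r}. Then the same statement holds in k[x_1,...,x_n]: any homogeneous ideal containing a homogeneous regular sequence of degrees a_1,...,a_r has the same Hilbert function as an ideal containing x_1^{a_1},...,x_r^{a_r}. -/
open MvPolynomial

/-- Hilbert function of a homogeneous ideal `I`: the `K`-dimension of its degree-`d` piece. -/
noncomputable def hilb {K : Type} [Field K] {n : ℕ}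
    (I : Ideal (MvPolynomial (Fin n) K)) (d : ℕ) : ℕ :=
  Module.finrank K ↥(Submodule.restrictScalars K I ⊓ homogeneousSubmodule (Fin n) K d)

/-- Hilbert function of the quotient `S/I` in degree `d`. -/
noncomputable def hilbQ {K : Type} [Field K] {n : ℕ}
    (I : Ideal (MvPolynomial (Fin n) K)) (d : ℕ) : ℕ :=
  Module.finrank K
    ((homogeneousSubmodule (Fin n) K d).map (Ideal.Quotient.mkₐ K I).toLinearMap)

/-- A homogeneous ideal: closed under taking homogeneous components. -/
def IsHomog {K : Type} [Field K] {n : ℕ} (I : Ideal (MvPolynomial (Fin n) K)) : Prop :=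
  ∀ f ∈ I, ∀ d : ℕ, homogeneousComponent d f ∈ I

/-- `f 0, ..., f (r-1)` is a regular sequence: it generates a proper ideal and each `f i`
is a nonzerodivisor modulo the ideal generated by the previous elements. -/
def IsRegSeq {K : Type} [Field K] {n r : ℕ} (f : Fin r → MvPolynomial (Fin n) K) : Prop :=
  Ideal.span (Set.range f) ≠ ⊤ ∧
  ∀ i : Fin r, ∀ g : MvPolynomial (Fin n) K,
    f i * g ∈ Ideal.span (f '' {j : Fin r | j < i}) →
      g ∈ Ideal.span (f '' {j : Fin r | j < i})

/-- A monomial ideal: generated by monomials. -/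
def IsMonomialIdeal {K : Type} [Field K] {n : ℕ} (I : Ideal (MvPolynomial (Fin n) K)) : Prop :=
  ∃ T : Set (Fin n →₀ ℕ), I = Ideal.span ((fun u => monomial u (1 : K)) '' T)

/-- `x^v` is lexicographically greater than `x^u` (for `x_0 > x_1 > ... > x_{n-1}`). -/
def lexGT {n : ℕ} (v u : Fin n →₀ ℕ) : Prop :=
  ∃ i : Fin n, u i < v i ∧ ∀ j : Fin n, j < i → v j = u j
/-- `EGHnr K n r h a`: every homogeneous ideal of `K[x_1,...,x_n]` containing a homogeneous
regular sequence of length `r` and degrees `a 0, ..., a (r-1)` has the same Hilbert function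
as some ideal containing the pure powers `x_i^{a i}` for `1 ≤ i ≤ r`. -/
def EGHnr (K : Type) [Field K] (n r : ℕ) (h : r ≤ n) (a : Fin r → ℕ) : Prop :=
  ∀ I : Ideal (MvPolynomial (Fin n) K), IsHomog I →
    (∃ f : Fin r → MvPolynomial (Fin n) K,
      IsRegSeq f ∧ (∀ i, (f i).IsHomogeneous (a i)) ∧ ∀ i, f i ∈ I) →
    ∃ J : Ideal (MvPolynomial (Fin n) K),
      (∀ i : Fin r, (X (Fin.castLE h i) : MvPolynomial (Fin n) K) ^ a i ∈ J) ∧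
      ∀ d : ℕ, hilb I d = hilb J d

/-!
Since `r ≤ n` and `K` is infinite, some linear form `g` is a nonzerodivisor modulo every initial
part of the regular sequence `f`; the crucial point is that `(f₁, …, fᵢ)` has positive depth for
`i ≤ n`, which follows from the same slicing by induction on the number of variables.
Restricting to the hyperplane `g = 0` identifies `S/(g)` with a polynomial ring in `n` variables,
keeps `f` regular, and gives

  `dim I_d = ∑_{j ≤ d} dim (π (I : g^j))_{d - j}`, where `π : S → S/(g)`.

By hypothesis the `j`-th slice has the Hilbert function of an ideal `J_j` containing the powers
`x_i ^ a_i`. The slices increase with `j`, but the `J_j` need not; they are therefore replaced by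
lex-plus-powers sets of monomials with the same Hilbert functions, which are nested as soon as
their Hilbert functions are ordered. That these sets are closed under multiplication by variables
is the Clements–Lindström theorem, proved by compression: among the sets of monomials of a given
degree and size, with shadow no larger than the given one, one of minimal total lexicographic rank
is a lexicographic segment. Stacking the nested sets along a new variable, with `J_j` at height
`j`, yields a monomial ideal with the required Hilbert function.
-/

open scoped Finset

namespace EGH

section UpperSegment

variable {α β : Type*} [LinearOrder β] {k : α → β}

/-- The number of elements of `X` lying strictly above `u`, where elements are compared through
the key `k`. -/
def rank (k : α → β) (X : Finset α) (u : α) : ℕ :=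
  #{w ∈ X | k u < k w}

/-- The `s` largest elements of `X`, where elements are compared through the key `k`. -/
def upperSegment (k : α → β) (X : Finset α) (s : ℕ) : Finset α :=
  {u ∈ X | rank k X u < s}

/-- `L` is an upper segment of `X` for the key `k`: it is closed under passing to larger elements
of `X`. -/
def IsUpperSegment (k : α → β) (X L : Finset α) : Prop :=
  L ⊆ X ∧ ∀ y ∈ L, ∀ x ∈ X, k y < k x → x ∈ L

lemma rank_lt_rank {X : Finset α} {u w : α} (hw : w ∈ X) (huw : k u < k w) :
    rank k X w < rank k X u := by
  refine Finset.card_lt_card (Finset.ssubset_iff_of_subset ?_ |>.2 ⟨w, by simp [hw, huw], by simp⟩)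
  exact Finset.monotone_filter_right X fun v _ hv => huw.trans hv

lemma upperSegment_subset (X : Finset α) (s : ℕ) : upperSegment k X s ⊆ X :=
  Finset.filter_subset _ _

lemma upperSegment_mono (X : Finset α) : Monotone (upperSegment k X) :=
  fun _ _ hst => Finset.monotone_filter_right X fun _ _ hu => lt_of_lt_of_le hu hst

lemma isUpperSegment_upperSegment (X : Finset α) (s : ℕ) :
    IsUpperSegment k X (upperSegment k X s) := by
  refine ⟨upperSegment_subset X s, fun y hy x hx hyx => ?_⟩
  exact Finset.mem_filter.2 ⟨hx, (rank_lt_rank hx hyx).trans (Finset.mem_filter.1 hy).2⟩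

lemma IsUpperSegment.subset_upperSegment {X L : Finset α} (hL : IsUpperSegment k X L) {s : ℕ}
    (hs : #L ≤ s) : L ⊆ upperSegment k X s := by
  intro u hu
  refine Finset.mem_filter.2 ⟨hL.1 hu, lt_of_lt_of_le (Finset.card_lt_card ?_) hs⟩
  refine Finset.ssubset_iff_of_subset (fun w hw => ?_) |>.2 ⟨u, hu, by simp⟩
  obtain ⟨hwX, huw⟩ := Finset.mem_filter.1 hw
  exact hL.2 u hu w hwX huw

variable (hk : Function.Injective k)
include hk

lemma rank_injOn (X : Finset α) : Set.InjOn (rank k X) X := by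
  intro u hu w hw h
  by_contra hne
  rcases lt_or_gt_of_ne (hk.ne hne) with huw | hwu
  · exact (rank_lt_rank hw huw).ne' h
  · exact (rank_lt_rank hu hwu).ne h

lemma image_rank (X : Finset α) : X.image (rank k X) = Finset.range #X := by
  refine Finset.eq_of_subset_of_card_le (fun _ hi => ?_) ?_
  · obtain ⟨u, hu, rfl⟩ := Finset.mem_image.1 hi
    exact Finset.mem_range.2 (Finset.card_lt_card (Finset.filter_ssubset.2 ⟨u, hu, by simp⟩))
  · rw [Finset.card_range, Finset.card_image_of_injOn (rank_injOn hk X)]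

lemma card_upperSegment {X : Finset α} {s : ℕ} (hs : s ≤ #X) : #(upperSegment k X s) = s := by
  have himage : (upperSegment k X s).image (rank k X) = Finset.range s := by
    rw [upperSegment, ← Finset.filter_image (p := (· < s)), image_rank hk]
    ext i
    simp only [Finset.mem_filter, Finset.mem_range]
    exact and_iff_right_of_imp fun hi => hi.trans_le hs
  rw [← Finset.card_image_of_injOn ((rank_injOn hk X).mono (upperSegment_subset X s)), himage,
    Finset.card_range]

lemma IsUpperSegment.eq_upperSegment {X L : Finset α} (hL : IsUpperSegment k X L) :
    L = upperSegment k X #L :=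
  Finset.eq_of_subset_of_card_le (hL.subset_upperSegment le_rfl)
    (card_upperSegment hk (Finset.card_le_card hL.1)).le

lemma IsUpperSegment.subset_of_card_le {X L M : Finset α} (hL : IsUpperSegment k X L)
    (hM : IsUpperSegment k X M) (h : #L ≤ #M) : L ⊆ M := by
  rw [hM.eq_upperSegment hk]
  exact hL.subset_upperSegment h

lemma IsUpperSegment.card_union_le [DecidableEq α] {X L M : Finset α}
    (hL : IsUpperSegment k X L) (hM : IsUpperSegment k X M) : #(L ∪ M) ≤ max #L #M := by
  rcases le_total #L #M with h | h
  · rw [Finset.union_eq_right.2 (hL.subset_of_card_le hk hM h)]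
    exact le_max_right _ _
  · rw [Finset.union_eq_left.2 (hM.subset_of_card_le hk hL h)]
    exact le_max_left _ _

lemma IsUpperSegment.sum_lt {X L B : Finset α} (hL : IsUpperSegment k X L) (hB : B ⊆ X)
    (hcard : #B = #L) (hne : B ≠ L) {f : α → ℕ}
    (hf : ∀ x ∈ X, ∀ y ∈ X, k x < k y → f y < f x) : ∑ x ∈ L, f x < ∑ x ∈ B, f x := by
  classical
  have hcard_sdiff : #(L \ B) = #(B \ L) := Finset.card_sdiff_comm hcard.symm
  have hnonempty : (L \ B).Nonempty := by
    rw [Finset.sdiff_nonempty]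
    exact fun h => hne (Finset.eq_of_subset_of_card_le h hcard.le).symm
  obtain ⟨m, hm, hmax⟩ := Finset.exists_max_image (L \ B) f hnonempty
  rw [Finset.mem_sdiff] at hm
  have hbelow : ∀ x ∈ B \ L, f m + 1 ≤ f x := by
    intro x hx
    rw [Finset.mem_sdiff] at hx
    refine hf x (hB hx.1) m (hL.1 hm.1) (lt_of_le_of_ne ?_ (hk.ne ?_))
    · exact not_lt.1 fun hlt => hx.2 (hL.2 m hm.1 x (hB hx.1) hlt)
    · rintro rfl
      exact hx.2 hm.1
  have hsdiff : ∑ x ∈ L \ B, f x < ∑ x ∈ B \ L, f x :=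
    calc ∑ x ∈ L \ B, f x ≤ #(L \ B) * f m := by
          simpa only [smul_eq_mul] using Finset.sum_le_card_nsmul _ f _ hmax
      _ < #(L \ B) * (f m + 1) := by
          exact Nat.mul_lt_mul_of_pos_left (Nat.lt_succ_self _) (Finset.card_pos.2 hnonempty)
      _ = #(B \ L) * (f m + 1) := by rw [hcard_sdiff]
      _ ≤ ∑ x ∈ B \ L, f x := by
          simpa only [smul_eq_mul] using Finset.card_nsmul_le_sum _ f _ hbelow
  rw [← Finset.sum_inter_add_sum_sdiff L B f, ← Finset.sum_inter_add_sum_sdiff B L f,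
    Finset.inter_comm B L]
  exact Nat.add_lt_add_left hsdiff _

end UpperSegment

section Exponents

variable {n : ℕ}

lemma toLex_lt_toLex_of_le_of_lt {u v : Fin n → ℕ} {i : Fin n} (hle : ∀ j < i, u j ≤ v j)
    (hi : u i < v i) : toLex u < toLex v := by
  by_contra hlt
  rcases (not_lt.1 hlt).eq_or_lt with heq | ⟨m, hm, hvu⟩
  · exact hi.ne' (congrFun (toLex.injective heq) i)
  · rcases lt_trichotomy m i with hmi | rfl | him
    · exact hvu.not_ge (hle m hmi)
    · exact hvu.not_gt hi
    · exact hi.ne' (hm i him)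

lemma toLex_le_toLex_of_sum_le {u v : Fin n → ℕ} {i : Fin n} (hle : ∀ j < i, u j ≤ v j)
    (hge : ∀ j > i, v j ≤ u j) (hsum : ∑ j, u j ≤ ∑ j, v j) : toLex u ≤ toLex v := by
  by_contra hlt
  obtain ⟨m, hm, hvu⟩ := not_le.1 hlt
  have him : i ≤ m := not_lt.1 fun hmi => hvu.not_ge (hle m hmi)
  refine hsum.not_gt (Finset.sum_lt_sum (fun j _ => ?_) ⟨m, Finset.mem_univ m, hvu⟩)
  rcases lt_trichotomy j m with hjm | rfl | hmj
  · exact (hm j hjm).le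
  · exact hvu.le
  · exact hge j (him.trans_lt hmj)

lemma exists_eq_add_single {u : Fin n → ℕ} {i : Fin n} (hi : 0 < u i) :
    ∃ v : Fin n → ℕ, u = v + Pi.single i 1 := by
  refine ⟨u - Pi.single i 1, (tsub_add_cancel_of_le fun j => ?_).symm⟩
  rcases eq_or_ne j i with rfl | hji
  · rw [Pi.single_eq_same]
    exact hi
  · simp [hji]

/-- The exponents of the monomials of degree `d` in `n` variables whose `i`-th exponent is
strictly below `a i`; the value `⊤` imposes no bound. -/
noncomputable def box (a : Fin n → ℕ∞) (d : ℕ) : Finset (Fin n → ℕ) :=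
  {u ∈ Finset.Nat.antidiagonalTuple n d | ∀ i, (u i : ℕ∞) < a i}

/-- The upper shadow of a set `A` of exponents: the exponents bounded by `a` of the products of a
variable and a monomial in `A`. -/
noncomputable def shadow (a : Fin n → ℕ∞) (A : Finset (Fin n → ℕ)) : Finset (Fin n → ℕ) :=
  {z ∈ Finset.image₂ (fun u i => u + Pi.single i 1) A Finset.univ | ∀ i, (z i : ℕ∞) < a i}

variable {a : Fin n → ℕ∞} {d : ℕ}

lemma mem_box {u : Fin n → ℕ} : u ∈ box a d ↔ ∑ i, u i = d ∧ ∀ i, (u i : ℕ∞) < a i := by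
  rw [box, Finset.mem_filter, Finset.Nat.mem_antidiagonalTuple]

lemma mem_shadow {A : Finset (Fin n → ℕ)} {z : Fin n → ℕ} :
    z ∈ shadow a A ↔ (∃ u ∈ A, ∃ i, u + Pi.single i 1 = z) ∧ ∀ i, (z i : ℕ∞) < a i := by
  simp [shadow]

lemma sum_add_single (u : Fin n → ℕ) (i : Fin n) :
    ∑ j, (u + Pi.single i 1 : Fin n → ℕ) j = ∑ j, u j + 1 := by
  simp [Finset.sum_add_distrib]

lemma mem_box_of_add_single_mem_box {u : Fin n → ℕ} {i : Fin n}
    (hu : u + Pi.single i 1 ∈ box a (d + 1)) : u ∈ box a d := by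
  rw [mem_box, sum_add_single] at hu
  refine mem_box.2 ⟨Nat.succ_injective hu.1, fun j => lt_of_le_of_lt ?_ (hu.2 j)⟩
  exact_mod_cast Nat.le_add_right _ _

lemma shadow_subset_box {A : Finset (Fin n → ℕ)} (hA : A ⊆ box a d) :
    shadow a A ⊆ box a (d + 1) := by
  intro z hz
  obtain ⟨⟨u, hu, i, rfl⟩, hz⟩ := mem_shadow.1 hz
  exact mem_box.2 ⟨by rw [sum_add_single, (mem_box.1 (hA hu)).1], hz⟩

lemma shadow_subset_shadow {A B : Finset (Fin n → ℕ)} (h : A ⊆ B) : shadow a A ⊆ shadow a B :=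
  Finset.filter_subset_filter _ (Finset.image₂_subset_right h)

/-- The upper segments of `box a d` for the lexicographic order. -/
abbrev IsLexSegment (a : Fin n → ℕ∞) (d : ℕ) (L : Finset (Fin n → ℕ)) : Prop :=
  IsUpperSegment toLex (box a d) L

lemma IsLexSegment.mem_of_le {L : Finset (Fin n → ℕ)} (hL : IsLexSegment a d L)
    {u v : Fin n → ℕ} (hu : u ∈ L) (hv : v ∈ box a d) (huv : toLex u ≤ toLex v) : v ∈ L := by
  rcases huv.eq_or_lt with heq | hlt
  · exact toLex.injective heq ▸ hu
  · exact hL.2 u hu v hv hlt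

lemma IsLexSegment.shadow {L : Finset (Fin n → ℕ)} (hL : IsLexSegment a d L) :
    IsLexSegment a (d + 1) (shadow a L) := by
  refine ⟨shadow_subset_box hL.1, fun z hz w hw hzw => ?_⟩
  obtain ⟨⟨u, hu, m, rfl⟩, -⟩ := mem_shadow.1 hz
  obtain ⟨i, hlt, hi⟩ := hzw
  replace hlt : ∀ j < i, u j ≤ w j := fun j hj => (Nat.le_add_right _ _).trans (hlt j hj).le
  replace hi : u i < w i := lt_of_le_of_lt (Nat.le_add_right _ _) hi
  suffices ∃ l v, w = v + Pi.single l 1 ∧ toLex u ≤ toLex v by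
    obtain ⟨l, v, rfl, huv⟩ := this
    exact mem_shadow.2
      ⟨⟨v, hL.mem_of_le hu (mem_box_of_add_single_mem_box hw) huv, l, rfl⟩, (mem_box.1 hw).2⟩
  by_cases htail : ∃ l > i, 0 < w l
  · obtain ⟨l, hil, hl⟩ := htail
    obtain ⟨v, rfl⟩ := exists_eq_add_single hl
    have hv : ∀ j ≤ i, (v + Pi.single l 1 : Fin n → ℕ) j = v j := by
      intro j hj
      simp [(hj.trans_lt hil).ne]
    refine ⟨l, v, rfl, (toLex_lt_toLex_of_le_of_lt (i := i) (fun j hj => ?_) ?_).le⟩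
    · exact hv j hj.le ▸ hlt j hj
    · exact hv i le_rfl ▸ hi
  · push Not at htail
    obtain ⟨v, rfl⟩ := exists_eq_add_single (Nat.zero_lt_of_lt hi)
    have hv : ∀ j ≠ i, (v + Pi.single i 1 : Fin n → ℕ) j = v j := by
      intro j hj
      simp [hj]
    refine ⟨i, v, rfl, toLex_le_toLex_of_sum_le (i := i) (fun j hj => ?_) (fun j hj => ?_) ?_⟩
    · exact hv j hj.ne ▸ hlt j hj
    · exact hv j hj.ne' ▸ (htail j hj).trans (Nat.zero_le _)
    · rw [(mem_box.1 (hL.1 hu)).1, (mem_box.1 (mem_box_of_add_single_mem_box hw)).1]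

end Exponents

section Slices

variable {n : ℕ} {p : Fin (n + 1)} {j : ℕ} {a : Fin (n + 1) → ℕ∞} {d : ℕ}

/-- The slice of `A` at height `j` of the `p`-th coordinate, with that coordinate removed. -/
noncomputable def slice (p : Fin (n + 1)) (j : ℕ) (A : Finset (Fin (n + 1) → ℕ)) :
    Finset (Fin n → ℕ) :=
  {u ∈ A | u p = j}.image p.removeNth

lemma mem_slice {A : Finset (Fin (n + 1) → ℕ)} {t : Fin n → ℕ} :
    t ∈ slice p j A ↔ (p.insertNth j t : Fin (n + 1) → ℕ) ∈ A := by
  simp only [slice, Finset.mem_image, Finset.mem_filter]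
  refine ⟨?_, fun h => ⟨_, ⟨h, by simp⟩, by simp⟩⟩
  rintro ⟨u, ⟨hu, rfl⟩, rfl⟩
  rwa [Fin.insertNth_self_removeNth]

lemma removeNth_mem_slice {A : Finset (Fin (n + 1) → ℕ)} {u : Fin (n + 1) → ℕ} (hu : u ∈ A) :
    p.removeNth u ∈ slice p (u p) A := by
  rwa [mem_slice, Fin.insertNth_self_removeNth]

lemma insertNth_mem_box {t : Fin n → ℕ} : (p.insertNth j t : Fin (n + 1) → ℕ) ∈ box a d ↔
    j + ∑ i, t i = d ∧ (j : ℕ∞) < a p ∧ ∀ i, (t i : ℕ∞) < p.removeNth a i := by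
  simp [mem_box, Fin.forall_iff_succAbove p, Fin.removeNth_apply]

lemma slice_box (hj : (j : ℕ∞) < a p) : slice p j (box a (j + d)) = box (p.removeNth a) d := by
  ext t
  rw [mem_slice, insertNth_mem_box, mem_box, Nat.add_left_cancel_iff, and_iff_right hj]

lemma slice_eq_empty {A : Finset (Fin (n + 1) → ℕ)} (hA : A ⊆ box a d) (hj : d < j) :
    slice p j A = ∅ := by
  refine Finset.eq_empty_of_forall_notMem fun t ht => ?_
  have := (insertNth_mem_box.1 (hA (mem_slice.1 ht))).1
  omega

lemma slice_subset_slice {A B : Finset (Fin (n + 1) → ℕ)} (h : A ⊆ B) :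
    slice p j A ⊆ slice p j B :=
  Finset.image_subset_image (Finset.filter_subset_filter _ h)

lemma insertNth_add_single_self (t : Fin n → ℕ) :
    (p.insertNth j t + Pi.single p 1 : Fin (n + 1) → ℕ) = p.insertNth (j + 1) t := by
  simp [funext_iff, Fin.forall_iff_succAbove p]

lemma insertNth_add_single_succAbove (t : Fin n → ℕ) (i : Fin n) :
    (p.insertNth j t + Pi.single (p.succAbove i) 1 : Fin (n + 1) → ℕ) =
      p.insertNth j (t + Pi.single i 1) := by
  simp [funext_iff, Fin.forall_iff_succAbove p, Pi.single_apply]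

lemma toLex_insertNth_lt {t t' : Fin n → ℕ} (h : toLex t < toLex t') :
    toLex (p.insertNth j t : Fin (n + 1) → ℕ) < toLex (p.insertNth j t' : Fin (n + 1) → ℕ) := by
  obtain ⟨m, hm, hlt⟩ := h
  refine toLex_lt_toLex_of_le_of_lt (i := p.succAbove m) (fun i => ?_) (by simpa using hlt)
  refine Fin.succAboveCases p (by simp) (fun i hi => ?_) i
  simpa using (hm i (Fin.succAbove_lt_succAbove_iff.1 hi)).le

lemma sum_eq_sum_slice (p : Fin (n + 1)) {A : Finset (Fin (n + 1) → ℕ)} (hA : A ⊆ box a d)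
    (f : (Fin (n + 1) → ℕ) → ℕ) :
    ∑ u ∈ A, f u = ∑ j ∈ Finset.range (d + 1), ∑ t ∈ slice p j A, f (p.insertNth j t) := by
  have hmaps : ∀ u ∈ A, u p ∈ Finset.range (d + 1) := by
    intro u hu
    rw [Finset.mem_range_succ_iff, ← (mem_box.1 (hA hu)).1]
    exact Finset.single_le_sum_of_canonicallyOrdered (Finset.mem_univ p)
  rw [← Finset.sum_fiberwise_of_maps_to hmaps]
  refine Finset.sum_congr rfl fun j _ => ?_
  rw [slice, Finset.sum_image]
  · refine Finset.sum_congr rfl fun u hu => ?_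
    rw [← (Finset.mem_filter.1 hu).2, Fin.insertNth_self_removeNth]
  · intro u hu v hv huv
    rw [← Fin.insertNth_self_removeNth p u, ← Fin.insertNth_self_removeNth p v, huv,
      (Finset.mem_filter.1 hu).2, (Finset.mem_filter.1 hv).2]

lemma card_eq_sum_card_slice (p : Fin (n + 1)) {A : Finset (Fin (n + 1) → ℕ)}
    (hA : A ⊆ box a d) : #A = ∑ j ∈ Finset.range (d + 1), #(slice p j A) := by
  simpa only [Finset.card_eq_sum_ones] using sum_eq_sum_slice p hA fun _ => 1

lemma mem_slice_shadow {A : Finset (Fin (n + 1) → ℕ)} (hA : A ⊆ box a d) {t : Fin n → ℕ} :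
    t ∈ slice p j (shadow a A) ↔ (j : ℕ∞) < a p ∧
      (t ∈ shadow (p.removeNth a) (slice p j A) ∨ ∃ i, i + 1 = j ∧ t ∈ slice p i A) := by
  have hbounds : (∀ i, ((p.insertNth j t : Fin (n + 1) → ℕ) i : ℕ∞) < a i) ↔
      (j : ℕ∞) < a p ∧ ∀ i, (t i : ℕ∞) < p.removeNth a i := by
    simp [Fin.forall_iff_succAbove p, Fin.removeNth_apply]
  rw [mem_slice, mem_shadow, hbounds, mem_shadow]
  constructor
  · rintro ⟨⟨u, hu, i, hui⟩, hj, ht⟩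
    refine ⟨hj, ?_⟩
    obtain rfl | ⟨i, rfl⟩ := Fin.eq_self_or_eq_succAbove p i
    · rw [← Fin.insertNth_self_removeNth i u, insertNth_add_single_self, Fin.insertNth_inj] at hui
      obtain ⟨rfl, rfl⟩ := hui
      exact Or.inr ⟨u i, rfl, removeNth_mem_slice hu⟩
    · rw [← Fin.insertNth_self_removeNth p u, insertNth_add_single_succAbove,
        Fin.insertNth_inj] at hui
      obtain ⟨rfl, rfl⟩ := hui
      exact Or.inl ⟨⟨_, removeNth_mem_slice hu, i, rfl⟩, ht⟩
  · rintro ⟨hj, ⟨⟨s, hs, i, rfl⟩, ht⟩ | ⟨i, rfl, ht⟩⟩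
    · exact ⟨⟨_, mem_slice.1 hs, p.succAbove i, insertNth_add_single_succAbove s i⟩, hj, ht⟩
    · refine ⟨⟨_, mem_slice.1 ht, p, insertNth_add_single_self t⟩, hj, ?_⟩
      exact (insertNth_mem_box.1 (hA (mem_slice.1 ht))).2.2

lemma slice_shadow_of_le {A : Finset (Fin (n + 1) → ℕ)} (hA : A ⊆ box a d) (hj : a p ≤ j) :
    slice p j (shadow a A) = ∅ :=
  Finset.eq_empty_of_forall_notMem fun _ ht => ((mem_slice_shadow hA).1 ht).1.not_ge hj

lemma slice_zero_shadow {A : Finset (Fin (n + 1) → ℕ)} (hA : A ⊆ box a d)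
    (hp : ((0 : ℕ) : ℕ∞) < a p) :
    slice p 0 (shadow a A) = shadow (p.removeNth a) (slice p 0 A) := by
  ext t
  rw [mem_slice_shadow hA, and_iff_right hp]
  simp

lemma slice_succ_shadow {A : Finset (Fin (n + 1) → ℕ)} (hA : A ⊆ box a d)
    (hj : ((j + 1 : ℕ) : ℕ∞) < a p) : slice p (j + 1) (shadow a A) =
      shadow (p.removeNth a) (slice p (j + 1) A) ∪ slice p j A := by
  ext t
  rw [mem_slice_shadow hA, Finset.mem_union, and_iff_right hj]
  simp

end Slices

section Compression

variable {n : ℕ} {p : Fin (n + 1)} {a : Fin (n + 1) → ℕ∞} {d : ℕ}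
  {A : Finset (Fin (n + 1) → ℕ)}

/-- The bound `a` is Macaulay if lexicographic segments have the smallest upper shadows among all
sets of exponents of the same degree and at least the same size. -/
def IsMacaulay {n : ℕ} (a : Fin n → ℕ∞) : Prop :=
  ∀ (d : ℕ) (A L : Finset (Fin n → ℕ)), A ⊆ box a d → IsLexSegment a d L → #L ≤ #A →
    #(shadow a L) ≤ #(shadow a A)

/-- The compression of `A` inside `X` along the `p`-th coordinate: every slice of `A` is replaced
by the lexicographic segment of the same size in the corresponding slice of `X`. -/
noncomputable def compress (p : Fin (n + 1)) (X A : Finset (Fin (n + 1) → ℕ)) :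
    Finset (Fin (n + 1) → ℕ) :=
  {u ∈ X | p.removeNth u ∈ upperSegment toLex (slice p (u p) X) #(slice p (u p) A)}

lemma compress_subset (X A : Finset (Fin (n + 1) → ℕ)) : compress p X A ⊆ X :=
  Finset.filter_subset _ _

lemma slice_compress (X A : Finset (Fin (n + 1) → ℕ)) (j : ℕ) :
    slice p j (compress p X A) = upperSegment toLex (slice p j X) #(slice p j A) := by
  ext t
  simp only [mem_slice, compress, Finset.mem_filter, Fin.insertNth_apply_same,
    Fin.removeNth_insertNth]
  exact and_iff_right_of_imp fun h => mem_slice.1 (upperSegment_subset _ _ h)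

lemma card_slice_compress {X : Finset (Fin (n + 1) → ℕ)} (hA : A ⊆ X) (j : ℕ) :
    #(slice p j (compress p X A)) = #(slice p j A) := by
  rw [slice_compress, card_upperSegment toLex.injective
    (Finset.card_le_card (slice_subset_slice hA))]

lemma card_compress (hA : A ⊆ box a d) : #(compress p (box a d) A) = #A := by
  rw [card_eq_sum_card_slice p (compress_subset _ A), card_eq_sum_card_slice p hA]
  exact Finset.sum_congr rfl fun j _ => card_slice_compress hA j

lemma isLexSegment_empty {n : ℕ} (a : Fin n → ℕ∞) (d : ℕ) : IsLexSegment a d ∅ :=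
  ⟨Finset.empty_subset _, by simp⟩

lemma isLexSegment_slice_compress (A : Finset (Fin (n + 1) → ℕ)) {j : ℕ} (hj : (j : ℕ∞) < a p) :
    IsLexSegment (p.removeNth a) (d - j) (slice p j (compress p (box a d) A)) := by
  rcases le_or_gt j d with hjd | hdj
  · obtain ⟨e, rfl⟩ := Nat.exists_eq_add_of_le hjd
    rw [slice_compress, slice_box hj, Nat.add_sub_cancel_left]
    exact isUpperSegment_upperSegment _ _
  · rw [slice_eq_empty (compress_subset _ A) hdj]
    exact isLexSegment_empty _ _

lemma card_shadow_slice_compress_le (hmac : IsMacaulay (p.removeNth a)) (hA : A ⊆ box a d)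
    {j : ℕ} (hj : (j : ℕ∞) < a p) :
    #(shadow (p.removeNth a) (slice p j (compress p (box a d) A))) ≤
      #(shadow (p.removeNth a) (slice p j A)) := by
  rcases le_or_gt j d with hjd | hdj
  · refine hmac (d - j) _ _ ?_ (isLexSegment_slice_compress A hj) (card_slice_compress hA j).le
    rw [← slice_box hj, Nat.add_sub_cancel' hjd]
    exact slice_subset_slice hA
  · rw [slice_eq_empty (compress_subset _ A) hdj]
    simp [shadow]

lemma isLexSegment_shadow_slice_succ_compress (A : Finset (Fin (n + 1) → ℕ)) {j : ℕ}
    (hj : ((j + 1 : ℕ) : ℕ∞) < a p) : IsLexSegment (p.removeNth a) (d - j)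
      (shadow (p.removeNth a) (slice p (j + 1) (compress p (box a d) A))) := by
  rcases le_or_gt (j + 1) d with hjd | hdj
  · rw [show d - j = d - (j + 1) + 1 by omega]
    exact (isLexSegment_slice_compress A hj).shadow
  · rw [slice_eq_empty (compress_subset _ A) hdj]
    simpa [shadow] using isLexSegment_empty _ _

lemma card_slice_succ_shadow_compress_le (hmac : IsMacaulay (p.removeNth a))
    (hA : A ⊆ box a d) {j : ℕ} (hj : ((j + 1 : ℕ) : ℕ∞) < a p) :
    #(slice p (j + 1) (shadow a (compress p (box a d) A))) ≤
      #(slice p (j + 1) (shadow a A)) := by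
  set C := compress p (box a d) A
  have hCX : C ⊆ box a d := compress_subset _ _
  have hj' : (j : ℕ∞) < a p := lt_of_le_of_lt (by exact_mod_cast j.le_succ) hj
  have hunion := (isLexSegment_shadow_slice_succ_compress (d := d) A hj).card_union_le
    toLex.injective (isLexSegment_slice_compress A hj')
  rw [slice_succ_shadow hCX hj, slice_succ_shadow hA hj]
  calc #(shadow (p.removeNth a) (slice p (j + 1) C) ∪ slice p j C)
      ≤ max #(shadow (p.removeNth a) (slice p (j + 1) C)) #(slice p j C) :=
        hunion
    _ ≤ max #(shadow (p.removeNth a) (slice p (j + 1) A)) #(slice p j A) :=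
        max_le_max (card_shadow_slice_compress_le hmac hA hj) (card_slice_compress hA j).le
    _ ≤ #(shadow (p.removeNth a) (slice p (j + 1) A) ∪ slice p j A) :=
        max_le (Finset.card_le_card Finset.subset_union_left)
          (Finset.card_le_card Finset.subset_union_right)

lemma card_shadow_compress_le (hmac : IsMacaulay (p.removeNth a)) (hA : A ⊆ box a d) :
    #(shadow a (compress p (box a d) A)) ≤ #(shadow a A) := by
  have hCX : compress p (box a d) A ⊆ box a d := compress_subset _ _
  rw [card_eq_sum_card_slice p (shadow_subset_box hCX),
    card_eq_sum_card_slice p (shadow_subset_box hA)]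
  refine Finset.sum_le_sum fun j _ => ?_
  rcases le_or_gt (a p) j with hj | hj
  · rw [slice_shadow_of_le hCX hj, slice_shadow_of_le hA hj]
  · cases j with
    | zero =>
      rw [slice_zero_shadow hCX hj, slice_zero_shadow hA hj]
      exact card_shadow_slice_compress_le hmac hA hj
    | succ j => exact card_slice_succ_shadow_compress_le hmac hA hj

lemma slice_ext {A B : Finset (Fin (n + 1) → ℕ)} (h : ∀ j, slice p j A = slice p j B) :
    A = B := by
  ext u
  rw [← Fin.insertNth_self_removeNth p u, ← mem_slice, ← mem_slice, h]

lemma sum_rank_compress_lt (hA : A ⊆ box a d) (hne : A ≠ compress p (box a d) A) :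
    ∑ u ∈ compress p (box a d) A, rank toLex (box a d) u <
      ∑ u ∈ A, rank toLex (box a d) u := by
  have hslice : ∀ j, slice p j A ≠ slice p j (compress p (box a d) A) →
      ∑ t ∈ slice p j (compress p (box a d) A),
          rank toLex (box a d) (p.insertNth j t : Fin (n + 1) → ℕ) <
        ∑ t ∈ slice p j A, rank toLex (box a d) (p.insertNth j t : Fin (n + 1) → ℕ) := by
    intro j hj
    refine IsUpperSegment.sum_lt (k := toLex) (X := slice p j (box a d)) toLex.injective ?_
      (slice_subset_slice hA) (card_slice_compress hA j).symm hj fun t _ t' ht' htt' =>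
        rank_lt_rank (mem_slice.1 ht') (toLex_insertNth_lt htt')
    rw [slice_compress]
    exact isUpperSegment_upperSegment _ _
  obtain ⟨j, hj⟩ : ∃ j, slice p j A ≠ slice p j (compress p (box a d) A) := by
    contrapose! hne
    exact slice_ext hne
  have hjd : j ≤ d := by
    by_contra hdj
    rw [slice_eq_empty hA (not_le.1 hdj), slice_eq_empty (compress_subset _ A) (not_le.1 hdj)] at hj
    exact hj rfl
  rw [sum_eq_sum_slice p (compress_subset (box a d) A), sum_eq_sum_slice p hA]
  refine Finset.sum_lt_sum (fun i _ => ?_) ⟨j, Finset.mem_range_succ_iff.2 hjd, hslice j hj⟩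
  by_cases hi : slice p i A = slice p i (compress p (box a d) A)
  · rw [← hi]
  · exact (hslice i hi).le

lemma mem_of_eq_compress (hfix : A = compress p (box a d) A) {u w : Fin (n + 1) → ℕ}
    (hu : u ∈ A) (hw : w ∈ box a d) (hp : u p = w p) (huw : toLex u < toLex w) : w ∈ A := by
  have hseg : IsUpperSegment toLex (slice p (w p) (box a d)) (slice p (w p) A) := by
    rw [hfix, slice_compress]
    exact isUpperSegment_upperSegment _ _
  have hlt : toLex (p.removeNth u) < toLex (p.removeNth w) := by
    by_contra hge
    rcases (not_lt.1 hge).eq_or_lt with heq | hgt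
    · refine huw.ne (congrArg toLex ?_)
      rw [← Fin.insertNth_self_removeNth p u, ← Fin.insertNth_self_removeNth p w, hp,
        toLex.injective heq]
    · have := toLex_insertNth_lt (p := p) (j := w p) hgt
      rw [Fin.insertNth_self_removeNth, ← hp, Fin.insertNth_self_removeNth] at this
      exact this.not_gt huw
  have := hseg.2 _ (hp ▸ removeNth_mem_slice hu) _ (removeNth_mem_slice hw) hlt
  rwa [mem_slice, Fin.insertNth_self_removeNth] at this

end Compression

section ClementsLindstrom

lemma isMacaulay_of_le_one {n : ℕ} (hn : n ≤ 1) (a : Fin n → ℕ∞) : IsMacaulay a := by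
  intro d A L hA hL hcard
  have hsubsingleton : ∀ u ∈ box a d, ∀ v ∈ box a d, u = v := by
    intro u hu v hv
    have hsum := (mem_box.1 hu).1.trans (mem_box.1 hv).1.symm
    interval_cases n
    · exact Subsingleton.elim u v
    · simpa [funext_iff, Fin.forall_fin_one] using hsum
  refine Finset.card_le_card (shadow_subset_shadow fun u hu => ?_)
  obtain ⟨v, hv⟩ := Finset.card_pos.1 ((Finset.card_pos.2 ⟨u, hu⟩).trans_le hcard)
  exact hsubsingleton u (hL.1 hu) v (hA hv) ▸ hv

section TwoVariables

variable {a : Fin 2 → ℕ∞} {d : ℕ} {A L : Finset (Fin 2 → ℕ)}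

lemma mem_box_two {u : Fin 2 → ℕ} :
    u ∈ box a d ↔ u 0 + u 1 = d ∧ (u 0 : ℕ∞) < a 0 ∧ (u 1 : ℕ∞) < a 1 := by
  simp [mem_box]

lemma add_single_zero_mem_shadow {u : Fin 2 → ℕ} (hA : A ⊆ box a d) (hu : u ∈ A)
    (h : ((u 0 + 1 : ℕ) : ℕ∞) < a 0) : u + Pi.single 0 1 ∈ shadow a A :=
  mem_shadow.2 ⟨⟨u, hu, 0, rfl⟩, by simpa using ⟨h, (mem_box_two.1 (hA hu)).2.2⟩⟩

lemma add_single_one_mem_shadow {u : Fin 2 → ℕ} (hA : A ⊆ box a d) (hu : u ∈ A)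
    (h : ((u 1 + 1 : ℕ) : ℕ∞) < a 1) : u + Pi.single 1 1 ∈ shadow a A :=
  mem_shadow.2 ⟨⟨u, hu, 1, rfl⟩, by simpa using ⟨(mem_box_two.1 (hA hu)).2.1, h⟩⟩

lemma card_filter_shadow_le (hL : IsLexSegment a d L) : #{z ∈ shadow a L | 0 < z 1} ≤ #L := by
  refine (Finset.card_le_card fun z hz => ?_).trans
    (Finset.card_image_le (s := L) (f := fun u => u + Pi.single 1 1))
  obtain ⟨hz, hz1⟩ := Finset.mem_filter.1 hz
  obtain ⟨w, rfl⟩ := exists_eq_add_single hz1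
  obtain ⟨⟨u, hu, i, hui⟩, -⟩ := mem_shadow.1 hz
  have hw : w ∈ box a d := mem_box_of_add_single_mem_box (shadow_subset_box hL.1 hz)
  refine Finset.mem_image_of_mem _ (hL.mem_of_le hu hw ?_)
  refine toLex_le_toLex_of_sum_le (i := 0) (by simp) (fun j hj => ?_) ?_
  · obtain rfl : j = 1 := by omega
    have := congrFun hui 1
    simp only [Pi.add_apply, Pi.single_eq_same] at this
    have : (Pi.single i 1 : Fin 2 → ℕ) 1 ≤ 1 := by
      rw [Pi.single_apply]; split_ifs <;> omega
    omega
  · rw [(mem_box.1 (hL.1 hu)).1, (mem_box.1 hw).1]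

lemma card_shadow_le_succ (hL : IsLexSegment a d L) : #(shadow a L) ≤ #L + 1 := by
  rw [← Finset.card_filter_add_card_filter_not (s := shadow a L) (fun z => 0 < z 1)]
  refine add_le_add (card_filter_shadow_le hL) (Finset.card_le_one.2 fun z hz w hw => ?_)
  rw [Finset.mem_filter] at hz hw
  have hzd := mem_box_two.1 (shadow_subset_box hL.1 hz.1)
  have hwd := mem_box_two.1 (shadow_subset_box hL.1 hw.1)
  rw [funext_iff, Fin.forall_fin_two]
  omega

lemma card_shadow_le (hL : IsLexSegment a d L) (h0 : a 0 ≤ (d + 1 : ℕ)) :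
    #(shadow a L) ≤ #L := by
  refine le_trans (Finset.card_le_card fun z hz => ?_) (card_filter_shadow_le hL)
  have hzd := mem_box_two.1 (shadow_subset_box hL.1 hz)
  have hz0 : z 0 < d + 1 := by exact_mod_cast hzd.2.1.trans_le h0
  exact Finset.mem_filter.2 ⟨hz, by omega⟩

lemma succ_card_le_card_shadow (ha : a 0 ≤ a 1) (hA : A ⊆ box a d) (hne : A.Nonempty)
    (h0 : ((d + 1 : ℕ) : ℕ∞) < a 0) : #A + 1 ≤ #(shadow a A) := by
  have hbound : ∀ u ∈ A, u 0 ≤ d ∧ u 1 ≤ d := by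
    intro u hu
    have := (mem_box_two.1 (hA hu)).1
    omega
  obtain ⟨u, hu, hmax⟩ := Finset.exists_max_image A (· 0) hne
  have hnotMem : u + Pi.single 0 1 ∉ A.image (· + Pi.single 1 1) := by
    intro h
    obtain ⟨w, hw, hwu⟩ := Finset.mem_image.1 h
    have := congrFun hwu 0
    have := hmax w hw
    simp_all
  rw [← Finset.card_image_of_injective A (add_left_injective (Pi.single 1 1)),
    ← Finset.card_insert_of_notMem hnotMem]
  refine Finset.card_le_card (Finset.insert_subset ?_ fun z hz => ?_)
  · refine add_single_zero_mem_shadow hA hu (lt_of_le_of_lt ?_ h0)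
    exact_mod_cast Nat.succ_le_succ (hbound u hu).1
  · obtain ⟨w, hw, rfl⟩ := Finset.mem_image.1 hz
    refine add_single_one_mem_shadow hA hw (lt_of_le_of_lt ?_ (h0.trans_le ha))
    exact_mod_cast Nat.succ_le_succ (hbound w hw).2

lemma card_le_card_shadow (hA : A ⊆ box a d) (hne : A ≠ box a d) : #A ≤ #(shadow a A) := by
  obtain ⟨x, hx, hxA⟩ := Finset.exists_of_ssubset (hA.ssubset_of_ne hne)
  rw [mem_box_two] at hx
  have hdeg : ∀ u ∈ A, u 0 + u 1 = d := fun u hu => (mem_box_two.1 (hA hu)).1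
  have hx0 : ∀ u ∈ A, u 0 ≠ x 0 := by
    intro u hu h
    have := hdeg u hu
    refine hxA ((?_ : u = x) ▸ hu)
    rw [funext_iff, Fin.forall_fin_two]
    omega
  refine Finset.card_le_card_of_injOn
    (fun u => if u 0 < x 0 then u + Pi.single 0 1 else u + Pi.single 1 1) (fun u hu => ?_)
    fun u hu w hw huw => ?_
  · dsimp only
    split_ifs with hux
    · refine add_single_zero_mem_shadow hA hu (lt_of_le_of_lt ?_ hx.2.1)
      exact_mod_cast hux
    · refine add_single_one_mem_shadow hA hu (lt_of_le_of_lt ?_ hx.2.2)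
      have := hdeg u hu
      have := hx0 u hu
      norm_cast
      omega
  · have h0 := congrFun huw 0
    have h1 := congrFun huw 1
    have := hx0 u hu
    have := hx0 w hw
    rw [funext_iff, Fin.forall_fin_two]
    dsimp only at h0 h1
    split_ifs at h0 h1 <;> simp at h0 h1 <;> omega

lemma isMacaulay_two (ha : a 0 ≤ a 1) : IsMacaulay a := by
  intro d A L hA hL hcard
  rcases A.eq_empty_or_nonempty with rfl | hne
  · rw [Finset.card_eq_zero.1 (Nat.le_zero.1 hcard)]
  rcases lt_or_ge ((d + 1 : ℕ) : ℕ∞) (a 0) with h0 | h0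
  · exact (card_shadow_le_succ hL).trans
      ((Nat.succ_le_succ hcard).trans (succ_card_le_card_shadow ha hA hne h0))
  · by_cases hbox : A = box a d
    · exact Finset.card_le_card (shadow_subset_shadow (hbox ▸ hL.1))
    · exact (card_shadow_le hL h0).trans (hcard.trans (card_le_card_shadow hA hbox))

end TwoVariables

section Exchange

variable {n : ℕ}

lemma toLex_lt_toLex_of_add_single_eq {u v : Fin n → ℕ} {i l : Fin n}
    (h : u + Pi.single i 1 = v + Pi.single l 1) (hil : i < l) : toLex u < toLex v := by
  refine toLex_lt_toLex_of_le_of_lt (i := i) (fun j hj => ?_) ?_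
  · simpa [hj.ne, (hj.trans hil).ne] using (congrFun h j).le
  · have := congrFun h i
    simp only [Pi.add_apply, Pi.single_eq_same, Pi.single_eq_of_ne hil.ne] at this
    omega

lemma add_single_mem_box {a : Fin n → ℕ∞} {d : ℕ} {u : Fin n → ℕ} {i l : Fin n}
    (hu : u + Pi.single i 1 ∈ box a d) (hl : ((u l + 1 : ℕ) : ℕ∞) < a l) :
    u + Pi.single l 1 ∈ box a d := by
  rw [mem_box, sum_add_single] at hu ⊢
  refine ⟨hu.1, fun j => ?_⟩
  rcases eq_or_ne j l with rfl | hjl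
  · simpa using hl
  · refine lt_of_le_of_lt ?_ (hu.2 j)
    simp [hjl]

lemma toLex_add_single_lt {u : Fin n → ℕ} {i l : Fin n} (hil : i < l) :
    toLex (u + Pi.single l 1) < toLex (u + Pi.single i 1) :=
  toLex_lt_toLex_of_add_single_eq (add_right_comm _ _ _) hil

section ClosedUnderFixedCoordinate

variable {a : Fin (n + 3) → ℕ∞} {d : ℕ} {B : Finset (Fin (n + 3) → ℕ)} (hB : B ⊆ box a d)
  (hclosed : ∀ p, ∀ u ∈ B, ∀ w ∈ box a d, u p = w p → toLex u < toLex w → w ∈ B)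
include hclosed

lemma exists_notMem_last_eq_succ {x : Fin (n + 3) → ℕ} (hx : x ∈ box a d) (hxB : x ∉ B)
    {i : Fin (n + 3)} (hi0 : i ≠ 0) (hilast : i ≠ Fin.last _) (hi : 0 < x i)
    (hbound : ((x (Fin.last _) + 1 : ℕ) : ℕ∞) < a (Fin.last _)) :
    ∃ y ∈ box a d, y ∉ B ∧ y 0 = x 0 ∧ y (Fin.last _) = x (Fin.last _) + 1 := by
  obtain ⟨y, rfl⟩ := exists_eq_add_single hi
  have hyx := toLex_add_single_lt (u := y) (Fin.lt_last_iff_ne_last.2 hilast)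
  have hy : y + Pi.single (Fin.last _) 1 ∈ box a d :=
    add_single_mem_box hx (by simpa [hilast.symm] using hbound)
  have hy0 : (y + Pi.single (Fin.last _) 1 : Fin (n + 3) → ℕ) 0 =
      (y + Pi.single i 1 : Fin (n + 3) → ℕ) 0 := by
    simp [hi0.symm]
  exact ⟨_, hy, fun h => hxB (hclosed 0 _ h _ hx hy0 hyx), hy0, by simp [hilast.symm]⟩

include hB

lemma exists_mem_last_add_one_eq {v : Fin (n + 3) → ℕ} (hv : v ∈ B)
    (hlast : 0 < v (Fin.last _)) (hbound : ((v 1 + 1 : ℕ) : ℕ∞) < a 1) :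
    ∃ w ∈ B, w 0 = v 0 ∧ w (Fin.last _) + 1 = v (Fin.last _) := by
  obtain ⟨w, rfl⟩ := exists_eq_add_single hlast
  have hlast1 : (1 : Fin (n + 3)) < Fin.last _ := by simp [Fin.lt_def]
  have hw : w + Pi.single 1 1 ∈ box a d :=
    add_single_mem_box (hB hv) (by simpa [hlast1.ne] using hbound)
  have hw0 : (w + Pi.single 1 1 : Fin (n + 3) → ℕ) 0 =
      (w + Pi.single (Fin.last _) 1 : Fin (n + 3) → ℕ) 0 := by
    simp
  exact ⟨_, hclosed 0 _ hv _ hw hw0.symm (toLex_add_single_lt hlast1), hw0, by simp [hlast1.ne']⟩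

-- Moving a unit between a middle coordinate and the last one, in `x` or in `v`, preserves the
-- first coordinate; when no such move is left, the total degrees of `x` and `v` disagree.
lemma last_ne_last_add (ha : a 0 ≤ a 1) {c : ℕ} {x v : Fin (n + 3) → ℕ} (hx : x ∈ box a d)
    (hxB : x ∉ B) (hv : v ∈ B) (hvx : toLex v < toLex x) :
    v (Fin.last _) ≠ x (Fin.last _) + c := by
  intro hc
  induction c generalizing x v with
  | zero => exact hxB (hclosed (Fin.last _) v hv x hx hc hvx)
  | succ c ih =>
    have hv0 : v 0 < x 0 :=
      lt_of_le_of_ne (Pi.apply_le_of_toLex hvx.le (by simp)) fun h =>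
        hxB (hclosed 0 v hv x hx h hvx)
    have hlt {u w : Fin (n + 3) → ℕ} (h : u 0 < w 0) : toLex u < toLex w :=
      toLex_lt_toLex_of_le_of_lt (i := 0) (by simp) h
    have hmiddle : ∀ i : Fin (n + 3), i ≠ 0 ∧ i ≠ Fin.last _ → x i = 0 := by
      rintro i ⟨hi0, hilast⟩
      by_contra hi
      have hbound : ((x (Fin.last _) + 1 : ℕ) : ℕ∞) < a (Fin.last _) :=
        lt_of_le_of_lt (by norm_cast; omega) ((mem_box.1 (hB hv)).2 (Fin.last _))
      obtain ⟨y, hy, hyB, hy0, hylast⟩ :=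
        exists_notMem_last_eq_succ hclosed hx hxB hi0 hilast (Nat.pos_of_ne_zero hi) hbound
      exact ih hy hyB hv (hlt (hy0 ▸ hv0)) (by omega)
    have hfull : ¬ ((v 1 + 1 : ℕ) : ℕ∞) < a 1 := by
      intro h1
      obtain ⟨w, hw, hw0, hwlast⟩ := exists_mem_last_add_one_eq hB hclosed hv (by omega) h1
      exact ih hx hxB hw (hlt (hw0 ▸ hv0)) (by omega)
    have hx0v1 : x 0 ≤ v 1 := by
      have := ((mem_box.1 hx).2 0).trans_le (ha.trans (not_lt.1 hfull))
      exact Nat.lt_succ_iff.1 (by exact_mod_cast this)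
    have hxsum : x 0 + x (Fin.last _) = d := by
      rw [← (mem_box.1 hx).1, Fintype.sum_eq_add 0 (Fin.last _) Fin.last_pos.ne hmiddle]
    have hvsum : v 1 + v (Fin.last _) ≤ d := by
      rw [← (mem_box.1 (hB hv)).1]
      exact Finset.add_le_sum (fun _ _ => Nat.zero_le _) (Finset.mem_univ _) (Finset.mem_univ _)
        (by simp [Fin.ext_iff])
    omega

lemma last_lt_last (ha : a 0 ≤ a 1) {x v : Fin (n + 3) → ℕ} (hx : x ∈ box a d)
    (hxB : x ∉ B) (hv : v ∈ B) (hvx : toLex v < toLex x) : v (Fin.last _) < x (Fin.last _) := by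
  by_contra h
  obtain ⟨c, hc⟩ := Nat.exists_eq_add_of_le (not_lt.1 h)
  exact last_ne_last_add hB hclosed ha hx hxB hv hvx hc

end ClosedUnderFixedCoordinate

lemma card_shadow_insert_erase_le {a : Fin (n + 1) → ℕ∞} {d : ℕ}
    {B : Finset (Fin (n + 1) → ℕ)} {x v : Fin (n + 1) → ℕ} (hx : x ∈ box a d)
    (hmax : ∀ w ∈ box a d, toLex x < toLex w → w ∈ B) (hv : v ∈ B)
    (hmin : ∀ w ∈ B, toLex v ≤ toLex w) (hvx : toLex v < toLex x) (hB : B ⊆ box a d)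
    (hlast : v (Fin.last n) < x (Fin.last n)) :
    #(shadow a (insert x (B.erase v))) ≤ #(shadow a B) := by
  have hv' : v + Pi.single (Fin.last n) 1 ∈ shadow a B := by
    have hvd := mem_box.1 (hB hv)
    refine mem_shadow.2 ⟨⟨v, hv, _, rfl⟩, fun i => ?_⟩
    rcases eq_or_ne i (Fin.last n) with rfl | hi
    · refine lt_of_le_of_lt ?_ ((mem_box.1 hx).2 (Fin.last n))
      simpa using by exact_mod_cast hlast
    · simpa [hi] using hvd.2 i
  rw [← Finset.card_erase_add_one hv']
  refine (Finset.card_le_card fun z hz => ?_).trans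
    (Finset.card_insert_le (x + Pi.single (Fin.last n) 1) _)
  have hzbox : z ∈ box a (d + 1) := shadow_subset_box
    (Finset.insert_subset hx ((Finset.erase_subset v B).trans hB)) hz
  obtain ⟨⟨u, hu, i, rfl⟩, hbound⟩ := mem_shadow.1 hz
  rw [Finset.mem_insert, Finset.mem_erase]
  rcases (Fin.le_last i).eq_or_lt with rfl | hi
  · rcases Finset.mem_insert.1 hu with rfl | hu
    · exact Or.inl rfl
    · rw [Finset.mem_erase] at hu
      exact Or.inr ⟨fun h => hu.1 (add_right_cancel h), mem_shadow.2 ⟨⟨u, hu.2, _, rfl⟩, hbound⟩⟩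
  · right
    rcases Finset.mem_insert.1 hu with rfl | hu
    · obtain ⟨y, rfl⟩ := exists_eq_add_single (Nat.zero_lt_of_lt hlast)
      rw [add_right_comm] at hbound hzbox ⊢
      have hw := hmax _ (mem_box_of_add_single_mem_box hzbox) (toLex_add_single_lt hi)
      refine ⟨fun h => ?_, mem_shadow.2 ⟨⟨_, hw, _, rfl⟩, hbound⟩⟩
      exact (hvx.trans (toLex_add_single_lt hi)).ne (congrArg toLex (add_right_cancel h).symm)
    · rw [Finset.mem_erase] at hu
      refine ⟨fun h => ?_, mem_shadow.2 ⟨⟨u, hu.2, i, rfl⟩, hbound⟩⟩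
      exact (hmin u hu.2).not_gt (toLex_lt_toLex_of_add_single_eq h hi)

end Exchange

lemma isLexSegment_of_sum_rank_le {n : ℕ} {a : Fin (n + 3) → ℕ∞} (ha : a 0 ≤ a 1)
    (hmac : ∀ p : Fin (n + 3), IsMacaulay (p.removeNth a)) {d : ℕ}
    {B : Finset (Fin (n + 3) → ℕ)} (hB : B ⊆ box a d)
    (hmin : ∀ C ⊆ box a d, #C = #B → #(shadow a C) ≤ #(shadow a B) →
      ∑ u ∈ B, rank toLex (box a d) u ≤ ∑ u ∈ C, rank toLex (box a d) u) :
    IsLexSegment a d B := by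
  have hclosed : ∀ p, ∀ u ∈ B, ∀ w ∈ box a d, u p = w p → toLex u < toLex w → w ∈ B := by
    intro p u hu w hw hp huw
    refine mem_of_eq_compress (p := p) (by_contra fun hne => ?_) hu hw hp huw
    exact (sum_rank_compress_lt hB hne).not_ge (hmin _ (compress_subset _ _) (card_compress hB)
      (card_shadow_compress_le (hmac p) hB))
  refine ⟨hB, fun y hy x₀ hx₀ hyx₀ => by_contra fun hx₀B => ?_⟩
  obtain ⟨x, hx, hmax⟩ := Finset.exists_max_image (box a d \ B) toLex
    ⟨x₀, Finset.mem_sdiff.2 ⟨hx₀, hx₀B⟩⟩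
  obtain ⟨v, hv, hvmin⟩ := Finset.exists_min_image B toLex ⟨y, hy⟩
  have hvx : toLex v < toLex x :=
    ((hvmin y hy).trans_lt hyx₀).trans_le (hmax x₀ (Finset.mem_sdiff.2 ⟨hx₀, hx₀B⟩))
  obtain ⟨hx, hxB⟩ := Finset.mem_sdiff.1 hx
  have hxerase : x ∉ B.erase v := fun h => hxB (Finset.mem_of_mem_erase h)
  refine (hmin (insert x (B.erase v)) ?_ ?_ ?_).not_gt ?_
  · exact Finset.insert_subset hx ((Finset.erase_subset v B).trans hB)
  · rw [Finset.card_insert_of_notMem hxerase, Finset.card_erase_add_one hv]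
  · refine card_shadow_insert_erase_le hx (fun w hw hxw => ?_) hv hvmin hvx hB
      (last_lt_last hB hclosed ha hx hxB hv hvx)
    exact by_contra fun hwB => (hmax w (Finset.mem_sdiff.2 ⟨hw, hwB⟩)).not_gt hxw
  · rw [Finset.sum_insert hxerase, ← Finset.add_sum_erase B _ hv]
    exact Nat.add_lt_add_right (rank_lt_rank hx hvx) _

theorem isMacaulay_of_monotone {n : ℕ} {a : Fin n → ℕ∞} (ha : Monotone a) : IsMacaulay a := by
  induction n with
  | zero => exact isMacaulay_of_le_one zero_le_one a
  | succ n ih =>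
    match n with
    | 0 => exact isMacaulay_of_le_one le_rfl a
    | 1 => exact isMacaulay_two (ha (Fin.zero_le 1))
    | n + 2 =>
      have hmac : ∀ p : Fin (n + 3), IsMacaulay (p.removeNth a) := fun p =>
        ih (ha.comp (Fin.strictMono_succAbove p).monotone)
      intro d A L hA hL hcard
      obtain ⟨B, hB, hmin⟩ := Finset.exists_min_image
        {B ∈ (box a d).powerset | #B = #A ∧ #(shadow a B) ≤ #(shadow a A)}
        (fun B => ∑ u ∈ B, rank toLex (box a d) u) ⟨A, by simpa using hA⟩
      simp only [Finset.mem_filter, Finset.mem_powerset] at hB hmin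
      obtain ⟨hB, hBcard, hBshadow⟩ := hB
      have hBseg : IsLexSegment a d B :=
        isLexSegment_of_sum_rank_le (ha (Fin.zero_le 1)) hmac hB fun C hC hCcard hCshadow =>
          hmin C ⟨hC, hCcard.trans hBcard, hCshadow.trans hBshadow⟩
      have hLB : L ⊆ B := hL.subset_of_card_le toLex.injective hBseg (hBcard ▸ hcard)
      exact (Finset.card_le_card (shadow_subset_shadow hLB)).trans hBshadow

end ClementsLindstrom

section LexPlusPowers

variable {n : ℕ} {a : Fin n → ℕ∞} {M M' : Set (Fin n → ℕ)} {d : ℕ}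

open Classical in
/-- The elements of degree `d` of a set `M` of exponents. -/
noncomputable def degreePart (M : Set (Fin n → ℕ)) (d : ℕ) : Finset (Fin n → ℕ) :=
  {u ∈ Finset.Nat.antidiagonalTuple n d | u ∈ M}

/-- The lex-plus-powers set of exponents attached to `M`: it contains all exponents violating the
bound `a` and, in each degree, as many of the lexicographically largest remaining exponents as `M`
contains. -/
def lexPlusPowers (a : Fin n → ℕ∞) (M : Set (Fin n → ℕ)) : Set (Fin n → ℕ) :=
  {u | (∃ i, a i ≤ u i) ∨
    u ∈ upperSegment toLex (box a (∑ i, u i)) #(degreePart M (∑ i, u i) ∩ box a (∑ i, u i))}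

lemma mem_degreePart {u : Fin n → ℕ} : u ∈ degreePart M d ↔ ∑ i, u i = d ∧ u ∈ M := by
  classical
  rw [degreePart, Finset.mem_filter, Finset.Nat.mem_antidiagonalTuple]

lemma degreePart_inter_box_lexPlusPowers (a : Fin n → ℕ∞) (M : Set (Fin n → ℕ)) (d : ℕ) :
    degreePart (lexPlusPowers a M) d ∩ box a d =
      upperSegment toLex (box a d) #(degreePart M d ∩ box a d) := by
  ext u
  rw [Finset.mem_inter, mem_degreePart]
  constructor
  · rintro ⟨⟨rfl, ⟨i, hi⟩ | hu⟩, hbox⟩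
    · exact absurd hi ((mem_box.1 hbox).2 i).not_ge
    · exact hu
  · intro hu
    have hbox := upperSegment_subset _ _ hu
    obtain ⟨rfl, -⟩ := mem_box.1 hbox
    exact ⟨⟨rfl, Or.inr hu⟩, hbox⟩

lemma degreePart_sdiff_box (hM : ∀ u, (∃ i, a i ≤ u i) → u ∈ M) (d : ℕ) :
    degreePart M d \ box a d = Finset.Nat.antidiagonalTuple n d \ box a d := by
  ext u
  simp only [Finset.mem_sdiff, mem_degreePart, Finset.Nat.mem_antidiagonalTuple, mem_box]
  refine ⟨fun h => ⟨h.1.1, h.2⟩, fun h => ⟨⟨h.1, hM u ?_⟩, h.2⟩⟩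
  simpa [h.1] using h.2

lemma card_degreePart (hM : ∀ u, (∃ i, a i ≤ u i) → u ∈ M) (d : ℕ) :
    #(degreePart M d) =
      #(degreePart M d ∩ box a d) + #(Finset.Nat.antidiagonalTuple n d \ box a d) := by
  rw [← degreePart_sdiff_box hM, Finset.card_inter_add_card_sdiff]

lemma card_degreePart_lexPlusPowers (hM : ∀ u, (∃ i, a i ≤ u i) → u ∈ M) (d : ℕ) :
    #(degreePart (lexPlusPowers a M) d) = #(degreePart M d) := by
  rw [card_degreePart hM, card_degreePart (M := lexPlusPowers a M) (fun _ => Or.inl),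
    degreePart_inter_box_lexPlusPowers, card_upperSegment toLex.injective
      (Finset.card_le_card Finset.inter_subset_right)]

lemma lexPlusPowers_subset (hM : ∀ u, (∃ i, a i ≤ u i) → u ∈ M)
    (hM' : ∀ u, (∃ i, a i ≤ u i) → u ∈ M') (h : ∀ d, #(degreePart M d) ≤ #(degreePart M' d)) :
    lexPlusPowers a M ⊆ lexPlusPowers a M' := by
  rintro u (hu | hu)
  · exact Or.inl hu
  · refine Or.inr (upperSegment_mono _ ?_ hu)
    have := h (∑ i, u i)
    rwa [card_degreePart hM, card_degreePart hM', Nat.add_le_add_iff_right] at this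

lemma isUpperSet_of_add_single_mem {T : Set (Fin n → ℕ)}
    (h : ∀ u ∈ T, ∀ i, u + Pi.single i 1 ∈ T) : IsUpperSet T := by
  intro u w huw hu
  induction hs : ∑ i, w i generalizing w with
  | zero =>
    obtain rfl : u = w := le_antisymm huw fun i => by
      simp [(Finset.sum_eq_zero_iff.1 hs) i (Finset.mem_univ i)]
    exact hu
  | succ s ih =>
    by_cases hwu : w ≤ u
    · exact le_antisymm huw hwu ▸ hu
    · obtain ⟨i, hi⟩ := not_forall.1 hwu
      obtain ⟨v, rfl⟩ := exists_eq_add_single (Nat.zero_lt_of_lt (not_le.1 hi))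
      refine h v (ih (fun j => ?_) ?_) i
      · rcases eq_or_ne j i with rfl | hji
        · simpa [Nat.lt_succ_iff] using hi
        · simpa [hji] using huw j
      · rw [sum_add_single] at hs
        exact Nat.succ_injective hs

lemma shadow_degreePart_subset (hM : IsUpperSet M) :
    shadow a (degreePart M d ∩ box a d) ⊆ degreePart M (d + 1) ∩ box a (d + 1) := by
  refine fun z hz => Finset.mem_inter.2
    ⟨?_, shadow_subset_box Finset.inter_subset_right hz⟩
  obtain ⟨⟨u, hu, i, rfl⟩, -⟩ := mem_shadow.1 hz
  obtain ⟨hd, huM⟩ := mem_degreePart.1 (Finset.mem_inter.1 hu).1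
  exact mem_degreePart.2 ⟨by rw [sum_add_single, hd], hM le_self_add huM⟩

theorem isUpperSet_lexPlusPowers (ha : Monotone a) (hM : IsUpperSet M) :
    IsUpperSet (lexPlusPowers a M) := by
  refine isUpperSet_of_add_single_mem fun u hu i => or_iff_not_imp_left.2 fun hbound => ?_
  push Not at hbound
  replace hu := hu.resolve_left fun ⟨j, hj⟩ =>
    (hbound j).not_ge (hj.trans (by exact_mod_cast Nat.le_add_right _ _))
  rw [sum_add_single]
  set A := degreePart M (∑ i, u i) ∩ box a (∑ i, u i)
  set L := upperSegment toLex (box a (∑ i, u i)) #A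
  have hL : IsLexSegment a _ L := isUpperSegment_upperSegment _ _
  have hLA : #L ≤ #A :=
    (card_upperSegment toLex.injective (Finset.card_le_card Finset.inter_subset_right)).le
  exact hL.shadow.subset_upperSegment
    ((isMacaulay_of_monotone ha _ A L Finset.inter_subset_right hL hLA).trans
      (Finset.card_le_card (shadow_degreePart_subset hM)))
    (mem_shadow.2 ⟨⟨u, hu, i, rfl⟩, hbound⟩)

end LexPlusPowers

section Stack

variable {n : ℕ} {p : Fin (n + 1)} {M : ℕ → Set (Fin n → ℕ)}

/-- The set of exponents whose slice at height `j` of the `p`-th coordinate is `M j`. -/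
def stack (p : Fin (n + 1)) (M : ℕ → Set (Fin n → ℕ)) : Set (Fin (n + 1) → ℕ) :=
  {u | p.removeNth u ∈ M (u p)}

lemma isUpperSet_stack (hmono : Monotone M) (hM : ∀ j, IsUpperSet (M j)) :
    IsUpperSet (stack p M) :=
  fun u _ huw hu => hmono (huw p) (hM (u p) (fun i => huw (p.succAbove i)) hu)

lemma slice_degreePart_stack (j e : ℕ) :
    slice p j (degreePart (stack p M) (j + e)) = degreePart (M j) e := by
  ext t
  simp [mem_slice, mem_degreePart, stack, Fin.sum_univ_succAbove _ p]

lemma card_degreePart_stack (d : ℕ) : #(degreePart (stack p M) d) =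
    ∑ j ∈ Finset.range (d + 1), #(degreePart (M j) (d - j)) := by
  have hbox : degreePart (stack p M) d ⊆ box (fun _ => ⊤) d :=
    fun u hu => mem_box.2 ⟨(mem_degreePart.1 hu).1, fun i => ENat.natCast_lt_top (u i)⟩
  rw [card_eq_sum_card_slice p hbox]
  refine Finset.sum_congr rfl fun j hj => ?_
  rw [← slice_degreePart_stack (p := p), Nat.add_sub_cancel' (Finset.mem_range_succ_iff.1 hj)]

end Stack

section LeadingExponents

variable {K σ : Type*} [Field K] (m : MonomialOrder σ)

lemma linearIndependent_of_injective_degree {ι : Type*} {F : ι → MvPolynomial σ K}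
    (hF : ∀ i, F i ≠ 0) (hinj : Function.Injective fun i => m.degree (F i)) :
    LinearIndependent K F := by
  classical
  rw [linearIndependent_iff']
  intro s c hc
  by_contra! hcon
  obtain ⟨i, his, hi⟩ := hcon
  obtain ⟨t, ht, hmax⟩ := Finset.exists_max_image {i ∈ s | c i ≠ 0}
    (fun i => m.toSyn (m.degree (F i))) ⟨i, Finset.mem_filter.2 ⟨his, hi⟩⟩
  rw [Finset.mem_filter] at ht
  have hcoeff : ∑ i ∈ s, c i * coeff (m.degree (F t)) (F i) = 0 := by
    simpa [coeff_sum] using congrArg (coeff (m.degree (F t))) hc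
  rw [Finset.sum_eq_single_of_mem t ht.1] at hcoeff
  · exact mul_ne_zero ht.2 (m.coeff_degree_ne_zero_iff.2 (hF t)) hcoeff
  · intro j hj hjt
    rw [mul_eq_zero, or_iff_not_imp_left]
    intro hcj
    exact m.coeff_eq_zero_of_lt ((hmax j (Finset.mem_filter.2 ⟨hj, hcj⟩)).lt_of_ne
      fun h => hjt (hinj (m.toSyn.injective h)))

/-- The leading exponents, for the monomial order `m`, of the nonzero elements of `V`. -/
def leadingExponents (V : Submodule K (MvPolynomial σ K)) : Set (σ →₀ ℕ) :=
  {u | ∃ f ∈ V, f ≠ 0 ∧ m.degree f = u}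

lemma ncard_leadingExponents (V : Submodule K (MvPolynomial σ K)) [Module.Finite K V] :
    (leadingExponents m V).ncard = Module.finrank K V := by
  have hlead : ∀ u : leadingExponents m V, ∃ f : V, (f : MvPolynomial σ K) ≠ 0 ∧
      m.degree (f : MvPolynomial σ K) = u := fun ⟨u, f, hf, h0, hu⟩ => ⟨⟨f, hf⟩, h0, hu⟩
  choose F hF0 hF using hlead
  have hli : LinearIndependent K F := .of_comp V.subtype <|
    linearIndependent_of_injective_degree m hF0 fun u v huv =>
      Subtype.ext ((hF u).symm.trans (huv.trans (hF v)))
  have : Finite (leadingExponents m V) := hli.finite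
  have := Fintype.ofFinite (leadingExponents m V)
  rw [← Nat.card_coe_set_eq, Nat.card_eq_fintype_card]
  refine le_antisymm hli.fintype_card_le_finrank ?_
  let φ : V →ₗ[K] leadingExponents m V → K :=
    LinearMap.pi fun u => lcoeff K u.1 ∘ₗ V.subtype
  have hφ : Function.Injective φ := (injective_iff_map_eq_zero φ).2 fun f hf => by
    by_contra hne
    have h0 : (f : MvPolynomial σ K) ≠ 0 := fun h => hne (Subtype.ext h)
    exact m.coeff_degree_ne_zero_iff.2 h0 (congrFun hf ⟨_, f, f.2, h0, rfl⟩)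
  simpa using LinearMap.finrank_le_finrank_of_injective hφ

end LeadingExponents

section InitialExponents

variable {K : Type} [Field K] {n : ℕ} {I J : Ideal (MvPolynomial (Fin n) K)} {d : ℕ}
  {f : MvPolynomial (Fin n) K}

/-- The degree-`d` piece of the ideal `I`, whose dimension is `hilb I d`. -/
noncomputable abbrev gradedPiece (I : Ideal (MvPolynomial (Fin n) K)) (d : ℕ) :
    Submodule K (MvPolynomial (Fin n) K) :=
  Submodule.restrictScalars K I ⊓ homogeneousSubmodule (Fin n) K d

instance finite_gradedPiece (I : Ideal (MvPolynomial (Fin n) K)) (d : ℕ) :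
    Module.Finite K (gradedPiece I d) :=
  have : Module.Finite K (homogeneousSubmodule (Fin n) K d) :=
    Module.Finite.iff_fg.2 (homogeneousSubmodule_fg (Fin n) K d)
  Submodule.finiteDimensional_of_le inf_le_right

lemma hilb_eq_finrank (I : Ideal (MvPolynomial (Fin n) K)) (d : ℕ) :
    hilb I d = Module.finrank K (gradedPiece I d) :=
  rfl

lemma hilb_mono (h : I ≤ J) (d : ℕ) : hilb I d ≤ hilb J d :=
  Submodule.finrank_mono (inf_le_inf_right _ h)

/-- The lexicographically leading exponents of the nonzero homogeneous elements of `I`; for a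
homogeneous ideal these are the exponents of the monomials in its initial ideal. -/
def initialExponents (I : Ideal (MvPolynomial (Fin n) K)) : Set (Fin n → ℕ) :=
  {u | ∃ w ∈ leadingExponents MonomialOrder.lex (gradedPiece I (∑ i, u i)), ⇑w = u}

lemma sum_degree (m : MonomialOrder (Fin n)) (hf : f.IsHomogeneous d) (h0 : f ≠ 0) :
    ∑ i, m.degree f i = d := by
  rw [← Finsupp.degree_eq_sum]
  exact (hf.degree_eq_sum_deg_support (m.degree_mem_support h0)).symm

lemma degree_mem_initialExponents (hf : f ∈ gradedPiece I d) (h0 : f ≠ 0) :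
    ⇑(MonomialOrder.lex.degree f) ∈ initialExponents I :=
  ⟨_, ⟨f, by rwa [sum_degree _ hf.2 h0], h0, rfl⟩, rfl⟩

lemma card_degreePart_initialExponents (I : Ideal (MvPolynomial (Fin n) K)) (d : ℕ) :
    #(degreePart (initialExponents I) d) = hilb I d := by
  have himage : (degreePart (initialExponents I) d : Set (Fin n → ℕ)) =
      (⇑) '' leadingExponents MonomialOrder.lex (gradedPiece I d) := by
    ext u
    rw [Finset.mem_coe, mem_degreePart]
    constructor
    · rintro ⟨rfl, hu⟩
      exact hu
    · rintro ⟨_, ⟨f, hf, h0, rfl⟩, rfl⟩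
      exact ⟨sum_degree _ hf.2 h0, degree_mem_initialExponents hf h0⟩
  rw [← Set.ncard_coe_finset, himage, Set.ncard_image_of_injective _ DFunLike.coe_injective,
    ncard_leadingExponents, hilb_eq_finrank]

lemma isUpperSet_initialExponents (I : Ideal (MvPolynomial (Fin n) K)) :
    IsUpperSet (initialExponents I) := by
  classical
  rintro _ w hw ⟨_, ⟨f, hf, h0, rfl⟩, rfl⟩
  obtain ⟨v, rfl⟩ : ∃ v : Fin n → ℕ, w = v + MonomialOrder.lex.degree f :=
    ⟨_, (tsub_add_cancel_of_le hw).symm⟩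
  set x : MvPolynomial (Fin n) K := monomial (Finsupp.equivFunOnFinite.symm v) 1
  have hx : x ≠ 0 := by simp [x]
  have hdeg : ⇑(MonomialOrder.lex.degree (x * f)) = v + MonomialOrder.lex.degree f := by
    rw [MonomialOrder.degree_mul hx h0, MonomialOrder.degree_monomial, if_neg one_ne_zero]
    rfl
  exact hdeg ▸ degree_mem_initialExponents
    ⟨Ideal.mul_mem_left _ _ hf.1, (isHomogeneous_monomial _ rfl).mul hf.2⟩ (mul_ne_zero hx h0)

lemma mem_initialExponents_of_X_pow_mem {i : Fin n} {k : ℕ} (hI : X i ^ k ∈ I) {u : Fin n → ℕ}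
    (hu : k ≤ u i) : u ∈ initialExponents I := by
  classical
  have hdeg : ⇑(MonomialOrder.lex.degree (X i ^ k : MvPolynomial (Fin n) K)) = Pi.single i k := by
    rw [X_pow_eq_monomial, MonomialOrder.degree_monomial, if_neg one_ne_zero,
      Finsupp.single_eq_pi_single]
  refine isUpperSet_initialExponents I (fun j => ?_) <| hdeg ▸ degree_mem_initialExponents
    ⟨hI, isHomogeneous_X_pow i k⟩ (pow_ne_zero k (X_ne_zero i))
  rcases eq_or_ne j i with rfl | hji
  · simpa using hu
  · simp [hji]

lemma isUpperSet_preimage_coe {T : Set (Fin n → ℕ)} (hT : IsUpperSet T) :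
    IsUpperSet ((⇑) ⁻¹' T : Set (Fin n →₀ ℕ)) :=
  hT.preimage fun _ _ h => h

lemma hilb_restrictSupportIdeal {T : Set (Fin n → ℕ)} (hT : IsUpperSet T) (d : ℕ) :
    hilb (restrictSupportIdeal K _ (isUpperSet_preimage_coe hT)) d = #(degreePart T d) := by
  have hpiece : gradedPiece (restrictSupportIdeal K _ (isUpperSet_preimage_coe hT)) d =
      restrictSupport K ((⇑) ⁻¹' degreePart T d) := by
    have hweight (u : Fin n →₀ ℕ) : Finsupp.weight 1 u = ∑ i, u i := by
      rw [← Finsupp.degree_eq_sum, Finsupp.degree_eq_weight_one]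
      rfl
    ext f
    rw [Submodule.mem_inf, restrictScalars_restrictSupportIdeal, mem_homogeneousSubmodule]
    simp only [mem_restrictSupport_iff, Set.subset_def, Set.mem_preimage, Finset.mem_coe,
      mem_degreePart, IsHomogeneous, IsWeightedHomogeneous, mem_support_iff, hweight]
    exact ⟨fun h u hu => ⟨h.2 hu, h.1 u hu⟩, fun h =>
      ⟨fun u hu => (h u hu).2, fun u hu => (h u hu).1⟩⟩
  rw [hilb_eq_finrank, hpiece, Module.finrank_eq_nat_card_basis (basisRestrictSupport K _),
    Nat.card_coe_set_eq, Set.ncard_preimage_of_injective_subset_range DFunLike.coe_injective,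
    Set.ncard_coe_finset]
  exact fun u _ => ⟨Finsupp.equivFunOnFinite.symm u, rfl⟩

end InitialExponents

section WeaklyRegular

variable {S R : Type*} [CommRing S] [CommRing R] {r : ℕ}

/-- The ideal generated by the first `i` members of the sequence `f`. -/
def initialSpan (f : Fin r → S) (i : ℕ) : Ideal S :=
  Ideal.span (f '' {j | (j : ℕ) < i})

/-- The first `i` members of the sequence `f` form a weakly regular sequence: each of them is a
nonzerodivisor modulo its predecessors, but they may generate the unit ideal. -/
def IsWeaklyRegularBelow (f : Fin r → S) (i : ℕ) : Prop :=
  ∀ j : Fin r, (j : ℕ) < i → IsSMulRegular (S ⧸ initialSpan f j) (f j)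

lemma isSMulRegular_quotient_iff {F : Ideal S} {g : S} :
    IsSMulRegular (S ⧸ F) g ↔ ∀ u, g * u ∈ F → u ∈ F :=
  isSMulRegular_quotient_iff_mem_of_smul_mem F g

lemma mem_sup_span_singleton {F : Ideal S} {g u : S} :
    u ∈ F ⊔ Ideal.span {g} ↔ ∃ w, u - g * w ∈ F := by
  rw [sup_comm, Ideal.mem_span_singleton_sup]
  constructor
  · rintro ⟨w, b, hb, rfl⟩
    exact ⟨w, by rwa [mul_comm, add_sub_cancel_left]⟩
  · rintro ⟨w, hw⟩
    exact ⟨w, _, hw, by ring⟩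

lemma initialSpan_zero (f : Fin r → S) : initialSpan f 0 = ⊥ := by
  simp [initialSpan]

lemma initialSpan_succ (f : Fin r → S) (i : Fin r) :
    initialSpan f (i + 1) = initialSpan f i ⊔ Ideal.span {f i} := by
  have hinsert : {j : Fin r | (j : ℕ) < i + 1} = insert i {j : Fin r | (j : ℕ) < i} := by
    ext j
    simp [le_iff_eq_or_lt, Fin.ext_iff]
  rw [initialSpan, hinsert, Set.image_insert_eq, Ideal.span_insert, sup_comm, initialSpan]

lemma map_initialSpan (π : S →+* R) (f : Fin r → S) (i : ℕ) :
    (initialSpan f i).map π = initialSpan (π ∘ f) i := by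
  rw [initialSpan, Ideal.map_span, ← Set.image_comp, initialSpan]

variable {π : S →+* R} {g : S}

lemma map_mem_map_iff (hπ : Function.Surjective π) (hker : RingHom.ker π = Ideal.span {g})
    {F : Ideal S} {u : S} : π u ∈ F.map π ↔ ∃ w, u - g * w ∈ F := by
  rw [← mem_sup_span_singleton, ← hker, ← Ideal.comap_map_of_surjective' π hπ, Ideal.mem_comap]

lemma IsWeaklyRegularBelow.map {f : Fin r → S} {i : ℕ} (hf : IsWeaklyRegularBelow f i)
    (hπ : Function.Surjective π) (hker : RingHom.ker π = Ideal.span {g})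
    (hg : ∀ j ≤ i, IsSMulRegular (S ⧸ initialSpan f j) g) :
    IsWeaklyRegularBelow (π ∘ f) i := by
  refine fun j hj => isSMulRegular_quotient_iff.2 fun y hy => ?_
  obtain ⟨u, rfl⟩ := hπ y
  rw [← map_initialSpan] at hy ⊢
  rw [Function.comp_apply, ← map_mul, map_mem_map_iff hπ hker] at hy
  obtain ⟨v, hv⟩ := hy
  have hgv : g * v ∈ initialSpan f (j + 1) := by
    rw [initialSpan_succ, mem_sup_span_singleton]
    exact ⟨u, by rwa [← neg_mem_iff, neg_sub]⟩
  have hvmem := isSMulRegular_quotient_iff.1 (hg (j + 1) hj) v hgv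
  rw [initialSpan_succ, mem_sup_span_singleton] at hvmem
  obtain ⟨w, hw⟩ := hvmem
  refine (map_mem_map_iff hπ hker).2 ⟨w, isSMulRegular_quotient_iff.1 (hf j hj) _ ?_⟩
  have hsum : f j * (u - g * w) = f j * u - g * v + g * (v - f j * w) := by ring
  exact hsum ▸ add_mem hv (Ideal.mul_mem_left _ g hw)

end WeaklyRegular

section LinearForms

variable {K : Type*} [Field K] {n : ℕ}

/-- The linear form with coefficient vector `c`. -/
noncomputable def linForm : (Fin n → K) →ₗ[K] MvPolynomial (Fin n) K :=
  Fintype.linearCombination K X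

lemma linForm_apply (c : Fin n → K) : linForm c = ∑ i, c i • X i :=
  Fintype.linearCombination_apply K X c

lemma linForm_single (i : Fin n) : linForm (Pi.single i (1 : K)) = X i := by
  rw [linForm, Fintype.linearCombination_apply_single, one_smul]

lemma isHomogeneous_linForm (c : Fin n → K) : (linForm c).IsHomogeneous 1 := by
  rw [linForm_apply]
  exact Submodule.sum_mem (homogeneousSubmodule (Fin n) K 1)
    fun i _ => Submodule.smul_mem _ _ (isHomogeneous_X K i)

/-- The irrelevant ideal is not associated to the quotient by `F`. -/
def HasPositiveDepth (F : Ideal (MvPolynomial (Fin n) K)) : Prop :=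
  ∀ u, (∀ i, X i * u ∈ F) → u ∈ F

lemma HasPositiveDepth.exists_X_notMem {F : Ideal (MvPolynomial (Fin n) K)}
    (hF : HasPositiveDepth F) {p : Ideal (MvPolynomial (Fin n) K)}
    (hp : p ∈ associatedPrimes (MvPolynomial (Fin n) K) (MvPolynomial (Fin n) K ⧸ F)) :
    ∃ i, X i ∉ p := by
  by_contra! hX
  obtain ⟨hprime, x, hpx⟩ := isAssociatedPrime_iff.1 hp
  obtain ⟨u, rfl⟩ := Ideal.Quotient.mk_surjective x
  have mem_p_iff (s : MvPolynomial (Fin n) K) : s ∈ p ↔ s * u ∈ F := by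
    rw [hpx, Submodule.mem_colon_singleton, Submodule.mem_bot]
    exact Ideal.Quotient.eq_zero_iff_mem
  refine hprime.ne_top ((Ideal.eq_top_iff_one p).2 ((mem_p_iff 1).2 ?_))
  rw [one_mul]
  exact hF u fun i => (mem_p_iff _).1 (hX i)

-- The coefficient vectors of zero-divisors lie in finitely many proper subspaces, one for each
-- associated prime, and these do not cover `Kⁿ` as `K` is infinite.
lemma exists_isSMulRegular_linForm [Infinite K] {ι : Type*} [Finite ι]
    (F : ι → Ideal (MvPolynomial (Fin n) K)) (hF : ∀ i, HasPositiveDepth (F i)) :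
    ∃ c : Fin n → K, ∀ i, IsSMulRegular (MvPolynomial (Fin n) K ⧸ F i) (linForm c) := by
  let Assoc (i : ι) :=
    associatedPrimes (MvPolynomial (Fin n) K) (MvPolynomial (Fin n) K ⧸ F i)
  have hfinite (i : ι) : Finite (Assoc i) := associatedPrimes.finite _ _
  let W (q : Σ i, Assoc i) : Subspace K (Fin n → K) :=
    (Submodule.restrictScalars K (q.2 : Ideal (MvPolynomial (Fin n) K))).comap linForm
  by_contra! hcon
  have hcover : ⋃ q, (W q : Set (Fin n → K)) = Set.univ := by
    refine Set.eq_univ_of_forall fun c => ?_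
    obtain ⟨i, hi⟩ := hcon c
    have hmem : linForm c ∈ ⋃ p ∈ Assoc i, (p : Set (MvPolynomial (Fin n) K)) := by
      rwa [biUnion_associatedPrimes_eq_compl_regular]
    obtain ⟨p, hp, hcp⟩ := Set.mem_iUnion₂.1 hmem
    exact Set.mem_iUnion.2 ⟨⟨i, p, hp⟩, hcp⟩
  obtain ⟨⟨i, p, hp⟩, htop⟩ := Subspace.exists_eq_top_of_iUnion_eq_univ hcover
  obtain ⟨k, hk⟩ := (hF i).exists_X_notMem hp
  refine hk (linForm_single (K := K) k ▸ ?_)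
  exact (htop ▸ Submodule.mem_top : Pi.single k (1 : K) ∈ W ⟨i, p, hp⟩)

/-- `π` restricts polynomial functions to the hyperplane cut out by the linear form `g`: it is a
graded surjection with kernel `(g)`, and every variable downstairs is the image of a variable. -/
structure IsHyperplaneRestriction
    (π : MvPolynomial (Fin (n + 1)) K →ₐ[K] MvPolynomial (Fin n) K)
    (g : MvPolynomial (Fin (n + 1)) K) : Prop where
  surjective : Function.Surjective π
  ker_eq : RingHom.ker (π : MvPolynomial (Fin (n + 1)) K →+* MvPolynomial (Fin n) K) =
    Ideal.span {g}
  isHomogeneous_map {u : MvPolynomial (Fin (n + 1)) K} {d : ℕ} :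
    u.IsHomogeneous d → (π u).IsHomogeneous d
  exists_map_X (j : Fin n) : ∃ e, π (X e) = X j
  isHomogeneous : g.IsHomogeneous 1
  ne_zero : g ≠ 0

/-- The substitution that eliminates the variable `X p` by means of the equation
`linForm c = 0`. -/
noncomputable def eliminate (c : Fin (n + 1) → K) (p : Fin (n + 1)) :
    MvPolynomial (Fin (n + 1)) K →ₐ[K] MvPolynomial (Fin n) K :=
  aeval (p.insertNth (-(c p)⁻¹ • linForm (p.removeNth c)) X)

variable {c : Fin (n + 1) → K} {p : Fin (n + 1)}

lemma eliminate_X_self (c : Fin (n + 1) → K) (p : Fin (n + 1)) :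
    eliminate c p (X p) = -(c p)⁻¹ • linForm (p.removeNth c) := by
  simp [eliminate]

lemma eliminate_X_succAbove (c : Fin (n + 1) → K) (p : Fin (n + 1)) (j : Fin n) :
    eliminate c p (X (p.succAbove j)) = X j := by
  simp [eliminate]

lemma eliminate_rename (c : Fin (n + 1) → K) (p : Fin (n + 1)) (u : MvPolynomial (Fin n) K) :
    eliminate c p (rename p.succAbove u) = u := by
  have hcomp : (eliminate c p).comp (rename p.succAbove) = AlgHom.id K _ := by
    ext j : 1
    simp [eliminate_X_succAbove]
  exact DFunLike.congr_fun hcomp u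

lemma linForm_eq_add_rename (c : Fin (n + 1) → K) (p : Fin (n + 1)) :
    linForm c = c p • X p + rename p.succAbove (linForm (p.removeNth c)) := by
  simp [linForm_apply, Fin.sum_univ_succAbove _ p, Fin.removeNth]

lemma eliminate_linForm (hp : c p ≠ 0) : eliminate c p (linForm c) = 0 := by
  rw [linForm_eq_add_rename c p, map_add, map_smul, eliminate_X_self, eliminate_rename, smul_smul,
    mul_neg, mul_inv_cancel₀ hp, neg_one_smul, neg_add_cancel]

lemma sub_rename_eliminate_mem (hp : c p ≠ 0) (u : MvPolynomial (Fin (n + 1)) K) :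
    u - rename p.succAbove (eliminate c p u) ∈ Ideal.span {linForm c} := by
  have hcomp : (Ideal.Quotient.mkₐ K (Ideal.span {linForm c})).comp
      ((rename p.succAbove).comp (eliminate c p)) = Ideal.Quotient.mkₐ K _ := by
    ext j : 1
    simp only [AlgHom.comp_apply, Ideal.Quotient.mkₐ_eq_mk]
    rw [eq_comm, Ideal.Quotient.eq, Ideal.mem_span_singleton']
    rcases Fin.eq_self_or_eq_succAbove p j with rfl | ⟨j, rfl⟩
    · refine ⟨C (c j)⁻¹, ?_⟩
      rw [C_mul', linForm_eq_add_rename c j, smul_add, inv_smul_smul₀ hp, eliminate_X_self,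
        map_smul, neg_smul, sub_neg_eq_add]
    · exact ⟨0, by simp [eliminate_X_succAbove]⟩
  rw [← Ideal.Quotient.eq]
  exact (DFunLike.congr_fun hcomp u).symm

lemma isHomogeneous_eliminate {u : MvPolynomial (Fin (n + 1)) K} {d : ℕ}
    (hu : u.IsHomogeneous d) : (eliminate c p u).IsHomogeneous d := by
  refine one_mul d ▸ hu.aeval _ fun j => ?_
  rcases Fin.eq_self_or_eq_succAbove p j with rfl | ⟨j, rfl⟩
  · rw [Fin.insertNth_apply_same]
    exact Submodule.smul_mem (homogeneousSubmodule (Fin n) K 1) _ (isHomogeneous_linForm _)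
  · rw [Fin.insertNth_apply_succAbove]
    exact isHomogeneous_X K j

lemma exists_isHyperplaneRestriction (hc : linForm c ≠ 0) :
    ∃ π, IsHyperplaneRestriction π (linForm c) := by
  obtain ⟨p, hp⟩ : ∃ p, c p ≠ 0 := by
    by_contra! hzero
    exact hc (by rw [funext hzero]; exact map_zero _)
  refine ⟨eliminate c p, fun u => ⟨_, eliminate_rename c p u⟩, le_antisymm (fun u hu => ?_) ?_,
    isHomogeneous_eliminate, fun j => ⟨_, eliminate_X_succAbove c p j⟩, isHomogeneous_linForm c, hc⟩
  · have hsub := sub_rename_eliminate_mem hp u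
    rwa [show eliminate c p u = 0 from hu, map_zero, sub_zero] at hsub
  · rw [Ideal.span_singleton_le_iff_mem]
    exact eliminate_linForm hp

end LinearForms

section Depth

variable {K : Type*} [Field K] {n r : ℕ}

lemma hasPositiveDepth_bot (hn : 0 < n) :
    HasPositiveDepth (⊥ : Ideal (MvPolynomial (Fin n) K)) := by
  intro u hu
  simpa [X_ne_zero] using hu ⟨0, hn⟩

lemma linForm_mul_mem {F : Ideal (MvPolynomial (Fin n) K)} {u : MvPolynomial (Fin n) K}
    (hu : ∀ i, X i * u ∈ F) (c : Fin n → K) : linForm c * u ∈ F := by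
  rw [linForm_apply, Finset.sum_mul]
  refine sum_mem fun i _ => ?_
  rw [smul_mul_assoc, ← C_mul']
  exact Ideal.mul_mem_left _ _ (hu i)

-- If `g * u = h * v` modulo `F`, then `v` vanishes modulo `F + (g)` by the depth of the
-- restriction, and cancelling `g` puts `u` in `F + (h)`.
lemma hasPositiveDepth_sup_span_singleton {F : Ideal (MvPolynomial (Fin (n + 1)) K)}
    {h : MvPolynomial (Fin (n + 1)) K} {c : Fin (n + 1) → K}
    {π : MvPolynomial (Fin (n + 1)) K →ₐ[K] MvPolynomial (Fin n) K}
    (hπ : IsHyperplaneRestriction π (linForm c))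
    (hh : IsSMulRegular (MvPolynomial (Fin (n + 1)) K ⧸ F) h)
    (hc : IsSMulRegular (MvPolynomial (Fin (n + 1)) K ⧸ F) (linForm c))
    (hdepth : HasPositiveDepth (F.map (π : _ →+* MvPolynomial (Fin n) K))) :
    HasPositiveDepth (F ⊔ Ideal.span {h}) := by
  intro u hu
  obtain ⟨v, hv⟩ := mem_sup_span_singleton.1 (linForm_mul_mem hu c)
  have hXv (e : Fin (n + 1)) : ∃ w, X e * v - linForm c * w ∈ F := by
    obtain ⟨w, hw⟩ := mem_sup_span_singleton.1 (hu e)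
    refine ⟨w, isSMulRegular_quotient_iff.1 hh _ ?_⟩
    convert sub_mem (Ideal.mul_mem_left _ (linForm c) hw) (Ideal.mul_mem_left _ (X e) hv) using 1
    ring
  have hπv : (π : _ →+* MvPolynomial (Fin n) K) v ∈ F.map (π : _ →+* _) := by
    refine hdepth _ fun j => ?_
    obtain ⟨e, he⟩ := hπ.exists_map_X j
    rw [← he]
    exact map_mul (π : _ →+* MvPolynomial (Fin n) K) (X e) v ▸
      (map_mem_map_iff hπ.surjective hπ.ker_eq).2 (hXv e)
  obtain ⟨w, hw⟩ := (map_mem_map_iff hπ.surjective hπ.ker_eq).1 hπv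
  refine mem_sup_span_singleton.2 ⟨w, isSMulRegular_quotient_iff.1 hc _ ?_⟩
  convert add_mem hv (Ideal.mul_mem_left _ h hw) using 1
  ring

lemma exists_regular_hyperplane [Infinite K] {f : Fin r → MvPolynomial (Fin (n + 1)) K} {i : ℕ}
    (hdepth : ∀ j ≤ i, HasPositiveDepth (initialSpan f j)) :
    ∃ (c : Fin (n + 1) → K) (π : MvPolynomial (Fin (n + 1)) K →ₐ[K] MvPolynomial (Fin n) K),
      IsHyperplaneRestriction π (linForm c) ∧ ∀ j ≤ i,
        IsSMulRegular (MvPolynomial (Fin (n + 1)) K ⧸ initialSpan f j) (linForm c) := by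
  obtain ⟨c, hc⟩ := exists_isSMulRegular_linForm (fun j : Set.Iic i => initialSpan f j)
    fun j => hdepth j j.2
  have hne : linForm c ≠ 0 := by
    intro hzero
    have h1 := isSMulRegular_quotient_iff.1 (hc ⟨0, i.zero_le⟩) 1
    simp [hzero, initialSpan_zero] at h1
  obtain ⟨π, hπ⟩ := exists_isHyperplaneRestriction hne
  exact ⟨c, π, hπ, fun j hj => hc ⟨j, hj⟩⟩

lemma IsWeaklyRegularBelow.mono {S : Type*} [CommRing S] {f : Fin r → S} {i j : ℕ}
    (hf : IsWeaklyRegularBelow f j) (hij : i ≤ j) : IsWeaklyRegularBelow f i :=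
  fun k hk => hf k (hk.trans_le hij)

lemma hasPositiveDepth_initialSpan [Infinite K] {f : Fin r → MvPolynomial (Fin n) K} {i : ℕ}
    (hf : IsWeaklyRegularBelow f i) (hir : i ≤ r) (hin : i < n) :
    HasPositiveDepth (initialSpan f i) := by
  induction i using Nat.strong_induction_on generalizing n with
  | _ i ih =>
  obtain _ | i := i
  · rw [initialSpan_zero]
    exact hasPositiveDepth_bot hin
  obtain ⟨n, rfl⟩ := Nat.exists_eq_add_one_of_ne_zero (Nat.ne_zero_of_lt hin)
  obtain ⟨c, π, hπ, hc⟩ := exists_regular_hyperplane (f := f) (i := i) fun j hj =>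
    ih j (by omega) (hf.mono (by omega)) (by omega) (by omega)
  have hrestr := (hf.mono i.le_succ).map hπ.surjective hπ.ker_eq hc
  have hdepth := ih i i.lt_succ_self hrestr (by omega) (by omega)
  rw [initialSpan_succ f ⟨i, hir⟩]
  refine hasPositiveDepth_sup_span_singleton hπ (hf ⟨i, hir⟩ i.lt_succ_self) (hc i le_rfl) ?_
  rwa [map_initialSpan]

end Depth

section Colon

variable {S : Type*} [CommRing S]

lemma colon_singleton_one (I : Ideal S) : I.colon {(1 : S)} = I := by
  ext u
  simp

lemma colon_pow_mono (I : Ideal S) (g : S) : Monotone fun j => I.colon {g ^ j} := by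
  intro i j hij u hu
  obtain ⟨k, rfl⟩ := Nat.exists_eq_add_of_le' hij
  rw [Submodule.mem_colon_singleton, smul_eq_mul] at hu ⊢
  rw [pow_add, mul_left_comm]
  exact Ideal.mul_mem_left _ _ hu

lemma colon_colon_pow (I : Ideal S) (g : S) (j : ℕ) :
    (I.colon {g}).colon {g ^ j} = I.colon {g ^ (j + 1)} := by
  ext u
  simp only [Submodule.mem_colon_singleton, smul_eq_mul, pow_succ, mul_assoc]

end Colon

section HomogeneousComponents

variable {K : Type*} [Field K] {σ τ : Type*}

attribute [local instance] MvPolynomial.gradedAlgebra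

lemma coe_decompose_eq_homogeneousComponent (u : MvPolynomial σ K) (d : ℕ) :
    (DirectSum.decompose (homogeneousSubmodule σ K) u d : MvPolynomial σ K) =
      homogeneousComponent d u :=
  decomposition.decompose'_apply u d

lemma homogeneousComponent_mul {g : MvPolynomial σ K} {e : ℕ} (hg : g.IsHomogeneous e) (d : ℕ)
    (u : MvPolynomial σ K) :
    homogeneousComponent (d + e) (u * g) = homogeneousComponent d u * g := by
  simpa only [coe_decompose_eq_homogeneousComponent] using
    DirectSum.coe_decompose_mul_add_of_right_mem (homogeneousSubmodule σ K) (a := u) hg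

lemma homogeneousComponent_mul_of_lt {g : MvPolynomial σ K} {d e : ℕ} (hg : g.IsHomogeneous e)
    (hd : d < e) (u : MvPolynomial σ K) : homogeneousComponent d (u * g) = 0 := by
  simpa only [coe_decompose_eq_homogeneousComponent] using
    DirectSum.coe_decompose_mul_of_right_mem_of_not_le (homogeneousSubmodule σ K) (a := u) hg
      hd.not_ge

lemma homogeneousComponent_map {φ : MvPolynomial σ K →ₗ[K] MvPolynomial τ K}
    (hφ : ∀ {u d}, u.IsHomogeneous d → (φ u).IsHomogeneous d) (d : ℕ) (u : MvPolynomial σ K) :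
    homogeneousComponent d (φ u) = φ (homogeneousComponent d u) := by
  conv_lhs => rw [← sum_homogeneousComponent u, map_sum, map_sum]
  have hterm (i : ℕ) : homogeneousComponent d (φ (homogeneousComponent i u)) =
      if d = i then φ (homogeneousComponent i u) else 0 :=
    homogeneousComponent_of_mem (hφ (homogeneousComponent_isHomogeneous i u))
  simp only [hterm, Finset.sum_ite_eq, Finset.mem_range, Nat.lt_succ_iff]
  split_ifs with hd
  · rfl
  · rw [homogeneousComponent_eq_zero _ _ (not_le.1 hd), map_zero]

end HomogeneousComponents

lemma finrank_ker_inf_add_finrank_map {K V W : Type*} [Field K] [AddCommGroup V] [Module K V]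
    [AddCommGroup W] [Module K W] (φ : V →ₗ[K] W) (A : Submodule K V) [Module.Finite K A] :
    Module.finrank K ↥(LinearMap.ker φ ⊓ A) + Module.finrank K (A.map φ) =
      Module.finrank K A := by
  have hker : (LinearMap.ker (φ.domRestrict A)).map A.subtype = LinearMap.ker φ ⊓ A := by
    rw [LinearMap.ker_domRestrict, Submodule.map_comap_subtype, inf_comm]
  rw [← hker, Submodule.finrank_map_subtype_eq, ← LinearMap.range_domRestrict, add_comm,
    LinearMap.finrank_range_add_finrank_ker]

section Slicing

variable {K : Type} [Field K] {n : ℕ} {I : Ideal (MvPolynomial (Fin (n + 1)) K)}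
  {π : MvPolynomial (Fin (n + 1)) K →ₐ[K] MvPolynomial (Fin n) K}
  {g : MvPolynomial (Fin (n + 1)) K}

lemma isHomog_colon {I : Ideal (MvPolynomial (Fin n) K)} (hI : IsHomog I)
    {h : MvPolynomial (Fin n) K} {e : ℕ} (hh : h.IsHomogeneous e) : IsHomog (I.colon {h}) := by
  intro u hu d
  rw [Submodule.mem_colon_singleton, smul_eq_mul] at hu ⊢
  rw [← homogeneousComponent_mul hh]
  exact hI _ hu _

namespace IsHyperplaneRestriction

lemma homogeneousComponent_map (hπ : IsHyperplaneRestriction π g) (d : ℕ)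
    (u : MvPolynomial (Fin (n + 1)) K) :
    homogeneousComponent d (π u) = π (homogeneousComponent d u) :=
  EGH.homogeneousComponent_map (φ := π.toLinearMap) hπ.isHomogeneous_map d u

lemma isHomog_map (hπ : IsHyperplaneRestriction π g) (hI : IsHomog I) : IsHomog (I.map π) := by
  intro y hy d
  obtain ⟨u, hu, rfl⟩ := (Ideal.mem_map_iff_of_surjective π hπ.surjective).1 hy
  rw [hπ.homogeneousComponent_map]
  exact Ideal.mem_map_of_mem π (hI u hu d)

lemma map_eq_zero_iff (hπ : IsHyperplaneRestriction π g) {u : MvPolynomial (Fin (n + 1)) K} :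
    π u = 0 ↔ ∃ v, v * g = u := by
  rw [← Ideal.mem_span_singleton', ← hπ.ker_eq]
  rfl

lemma map_gradedPiece (hπ : IsHyperplaneRestriction π g) (hI : IsHomog I) (d : ℕ) :
    (gradedPiece I d).map π.toLinearMap = gradedPiece (I.map π) d := by
  apply le_antisymm
  · rintro _ ⟨u, ⟨huI, hud⟩, rfl⟩
    exact ⟨Ideal.mem_map_of_mem π huI, hπ.isHomogeneous_map hud⟩
  · rintro y ⟨hyI, hyd⟩
    obtain ⟨u, hu, rfl⟩ := (Ideal.mem_map_iff_of_surjective π hπ.surjective).1 hyI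
    refine ⟨homogeneousComponent d u, ⟨hI u hu d, homogeneousComponent_isHomogeneous d u⟩, ?_⟩
    exact (hπ.homogeneousComponent_map d u).symm.trans (homogeneousComponent_eq_self hyd)

lemma ker_inf_gradedPiece_zero (hπ : IsHyperplaneRestriction π g) :
    LinearMap.ker π.toLinearMap ⊓ gradedPiece I 0 = ⊥ := by
  refine eq_bot_iff.2 ?_
  rintro u ⟨hπu, -, hu0⟩
  obtain ⟨v, rfl⟩ := hπ.map_eq_zero_iff.1 hπu
  rw [Submodule.mem_bot, ← homogeneousComponent_eq_self hu0]
  exact homogeneousComponent_mul_of_lt hπ.isHomogeneous one_pos v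

lemma ker_inf_gradedPiece_succ (hπ : IsHyperplaneRestriction π g) (d : ℕ) :
    LinearMap.ker π.toLinearMap ⊓ gradedPiece I (d + 1) =
      (gradedPiece (I.colon {g}) d).map (LinearMap.mulRight K g) := by
  apply le_antisymm
  · rintro u ⟨hπu, huI, hud⟩
    obtain ⟨v, rfl⟩ := hπ.map_eq_zero_iff.1 hπu
    have hvg : homogeneousComponent d v * g = v * g := by
      rw [← homogeneousComponent_mul hπ.isHomogeneous, homogeneousComponent_eq_self hud]
    refine ⟨homogeneousComponent d v, ⟨?_, homogeneousComponent_isHomogeneous d v⟩, hvg⟩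
    refine Submodule.mem_colon_singleton.2 ?_
    rw [smul_eq_mul, hvg]
    exact huI
  · rintro _ ⟨v, ⟨hvI, hvd⟩, rfl⟩
    exact ⟨hπ.map_eq_zero_iff.2 ⟨v, rfl⟩, Submodule.mem_colon_singleton.1 hvI,
      hvd.mul hπ.isHomogeneous⟩

lemma hilb_zero (hπ : IsHyperplaneRestriction π g) (hI : IsHomog I) :
    hilb I 0 = hilb (I.map π) 0 := by
  rw [hilb_eq_finrank, ← finrank_ker_inf_add_finrank_map π.toLinearMap,
    hπ.ker_inf_gradedPiece_zero, hπ.map_gradedPiece hI, finrank_bot, zero_add, hilb_eq_finrank]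

lemma hilb_succ (hπ : IsHyperplaneRestriction π g) (hI : IsHomog I) (d : ℕ) :
    hilb I (d + 1) = hilb (I.colon {g}) d + hilb (I.map π) (d + 1) := by
  have hinj : Function.Injective (LinearMap.mulRight K g) := mul_left_injective₀ hπ.ne_zero
  rw [hilb_eq_finrank, ← finrank_ker_inf_add_finrank_map π.toLinearMap,
    hπ.ker_inf_gradedPiece_succ, hπ.map_gradedPiece hI,
    ← (Submodule.equivMapOfInjective _ hinj (gradedPiece (I.colon {g}) d)).finrank_eq,
    hilb_eq_finrank, hilb_eq_finrank]

lemma hilb_eq_sum (hπ : IsHyperplaneRestriction π g) (hI : IsHomog I) (d : ℕ) :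
    hilb I d = ∑ j ∈ Finset.range (d + 1), hilb ((I.colon {g ^ j}).map π) (d - j) := by
  induction d generalizing I with
  | zero => simp [hπ.hilb_zero hI, colon_singleton_one]
  | succ d ih =>
    rw [hπ.hilb_succ hI, ih (isHomog_colon hI hπ.isHomogeneous), Finset.sum_range_succ' _ (d + 1),
      pow_zero, colon_singleton_one, Nat.sub_zero]
    simp only [colon_colon_pow, Nat.add_sub_add_right]

end IsHyperplaneRestriction

end Slicing

section RegularSequences

variable {K : Type} [Field K] {n r : ℕ} {a : Fin r → ℕ}

lemma span_range_ne_top_iff {σ ι : Type*} {f : ι → MvPolynomial σ K} {a : ι → ℕ}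
    (hf : ∀ i, (f i).IsHomogeneous (a i)) :
    Ideal.span (Set.range f) ≠ ⊤ ↔ ∀ i, a i = 0 → f i = 0 := by
  constructor
  · intro hproper i hi
    have hconst : f i = C (coeff 0 (f i)) := by
      rw [← homogeneousComponent_zero, homogeneousComponent_eq_self (hi ▸ hf i)]
    by_contra hne
    have hunit : IsUnit (f i) := by
      rw [hconst] at hne ⊢
      exact (isUnit_iff_ne_zero.2 fun h0 => hne (by rw [h0, C_0])).map C
    exact hproper (Ideal.eq_top_of_isUnit_mem _ (Ideal.subset_span ⟨i, rfl⟩) hunit)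
  · intro hzero
    have hle : Ideal.span (Set.range f) ≤ RingHom.ker (constantCoeff (R := K) (σ := σ)) := by
      rw [Ideal.span_le]
      rintro _ ⟨i, rfl⟩
      obtain hi | hi := eq_or_ne (a i) 0
      · rw [hzero i hi]
        exact zero_mem _
      · exact (hf i).coeff_eq_zero (by simpa using hi.symm)
    exact ne_top_of_le_ne_top (RingHom.ker_ne_top _) hle

lemma isRegSeq_iff {f : Fin r → MvPolynomial (Fin n) K} :
    IsRegSeq f ↔ Ideal.span (Set.range f) ≠ ⊤ ∧ IsWeaklyRegularBelow f r :=
  and_congr_right' (forall_congr' fun i =>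
    isSMulRegular_quotient_iff.symm.trans (imp_iff_right i.2).symm)

lemma isRegSeq_comp {f : Fin r → MvPolynomial (Fin (n + 1)) K}
    {π : MvPolynomial (Fin (n + 1)) K →ₐ[K] MvPolynomial (Fin n) K}
    {g : MvPolynomial (Fin (n + 1)) K} (hπ : IsHyperplaneRestriction π g) (hf : IsRegSeq f)
    (hhom : ∀ i, (f i).IsHomogeneous (a i))
    (hg : ∀ i ≤ r, IsSMulRegular (MvPolynomial (Fin (n + 1)) K ⧸ initialSpan f i) g) :
    IsRegSeq (π ∘ f) := by
  rw [isRegSeq_iff, span_range_ne_top_iff hhom] at hf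
  have hhomπ (i : Fin r) : ((π ∘ f) i).IsHomogeneous (a i) := hπ.isHomogeneous_map (hhom i)
  rw [isRegSeq_iff, span_range_ne_top_iff hhomπ]
  refine ⟨fun i hi => ?_, hf.2.map hπ.surjective hπ.ker_eq hg⟩
  rw [Function.comp_apply, hf.1 i hi, map_zero]

lemma exists_isHyperplaneRestriction_isRegSeq [Infinite K]
    {f : Fin r → MvPolynomial (Fin (n + 1)) K} (hr : r ≤ n) (hf : IsRegSeq f)
    (hhom : ∀ i, (f i).IsHomogeneous (a i)) :
    ∃ (g : MvPolynomial (Fin (n + 1)) K)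
      (π : MvPolynomial (Fin (n + 1)) K →ₐ[K] MvPolynomial (Fin n) K),
      IsHyperplaneRestriction π g ∧ IsRegSeq (π ∘ f) := by
  have hweak := (isRegSeq_iff.1 hf).2
  obtain ⟨c, π, hπ, hc⟩ := exists_regular_hyperplane fun i (hi : i ≤ r) =>
    hasPositiveDepth_initialSpan (hweak.mono hi) hi (by omega)
  exact ⟨linForm c, π, hπ, isRegSeq_comp hπ hf hhom hc⟩

end RegularSequences

section Assembly

variable {K : Type} [Field K] {n r : ℕ} {hr : r ≤ n} {a : Fin r → ℕ}

/-- The exponent bounds `a` on the first `r` of `n` variables, with `⊤` standing for no bound on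
the remaining ones. -/
def extendBound (n : ℕ) (a : Fin r → ℕ) (i : Fin n) : ℕ∞ :=
  if h : (i : ℕ) < r then a ⟨i, h⟩ else ⊤

lemma extendBound_castLE (hr : r ≤ n) (a : Fin r → ℕ) (i : Fin r) :
    extendBound n a (Fin.castLE hr i) = a i :=
  dif_pos i.2

lemma monotone_extendBound (n : ℕ) (ha : Monotone a) : Monotone (extendBound n a) := by
  intro i j hij
  by_cases hj : (j : ℕ) < r
  · have hi : (i : ℕ) < r := lt_of_le_of_lt hij hj
    rw [extendBound, extendBound, dif_pos hi, dif_pos hj, Nat.cast_le]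
    exact ha hij
  · have htop : extendBound n a j = ⊤ := dif_neg hj
    exact htop ▸ le_top

lemma mem_initialExponents_of_extendBound_le {J : Ideal (MvPolynomial (Fin n) K)}
    (hJ : ∀ i, X (Fin.castLE hr i) ^ a i ∈ J) {u : Fin n → ℕ}
    (hu : ∃ i, extendBound n a i ≤ u i) : u ∈ initialExponents J := by
  obtain ⟨i, hi⟩ := hu
  have hir : (i : ℕ) < r := by
    by_contra hir
    simp [extendBound, hir] at hi
  rw [extendBound, dif_pos hir, Nat.cast_le] at hi
  exact mem_initialExponents_of_X_pow_mem (hJ ⟨i, hir⟩) hi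

lemma exists_hilb_eq_sum (ha : Monotone a) {J : ℕ → Ideal (MvPolynomial (Fin n) K)}
    (hJ : ∀ j i, X (Fin.castLE hr i) ^ a i ∈ J j) (hmono : ∀ d, Monotone fun j => hilb (J j) d) :
    ∃ L : Ideal (MvPolynomial (Fin (n + 1)) K),
      (∀ i, X (Fin.castLE (hr.trans n.le_succ) i) ^ a i ∈ L) ∧
      ∀ d, hilb L d = ∑ j ∈ Finset.range (d + 1), hilb (J j) (d - j) := by
  have hbound (j : ℕ) (u : Fin n → ℕ) :
      (∃ i, extendBound n a i ≤ u i) → u ∈ initialExponents (J j) :=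
    mem_initialExponents_of_extendBound_le (hJ j)
  let M (j : ℕ) := lexPlusPowers (extendBound n a) (initialExponents (J j))
  have hM (j : ℕ) : IsUpperSet (M j) :=
    isUpperSet_lexPlusPowers (monotone_extendBound n ha) (isUpperSet_initialExponents (J j))
  have hMmono : Monotone M := fun i j hij => lexPlusPowers_subset (hbound i) (hbound j)
    fun d => by simpa only [card_degreePart_initialExponents] using hmono d hij
  have hT : IsUpperSet (stack (Fin.last n) M) := isUpperSet_stack hMmono hM
  refine ⟨restrictSupportIdeal K _ (isUpperSet_preimage_coe hT), fun i => ?_, fun d => ?_⟩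
  · rw [X_pow_eq_monomial]
    refine (monomial_mem_restrictSupport K).2 (Or.inl (Or.inl ⟨Fin.castLE hr i, ?_⟩))
    rw [extendBound_castLE, Nat.cast_le]
    simp [Fin.removeNth]
  · rw [hilb_restrictSupportIdeal hT, card_degreePart_stack]
    refine Finset.sum_congr rfl fun j _ => ?_
    rw [card_degreePart_lexPlusPowers (hbound j), card_degreePart_initialExponents]

end Assembly

end EGH

open EGH in
theorem stmt13_general {K : Type} [Field K] [Infinite K] {n r : ℕ} (hr : r ≤ n)
    (a : Fin r → ℕ) (hmono : Monotone a) (hEGH : EGHnr K n r hr a) :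
    EGHnr K (n + 1) r (hr.trans n.le_succ) a := by
  rintro I hI ⟨f, hf, hhom, hfI⟩
  obtain ⟨g, π, hπ, hπf⟩ := exists_isHyperplaneRestriction_isRegSeq hr hf hhom
  have hslice (j : ℕ) := hEGH ((I.colon {g ^ j}).map π)
    (hπ.isHomog_map (isHomog_colon hI (hπ.isHomogeneous.pow j)))
    ⟨π ∘ f, hπf, fun i => hπ.isHomogeneous_map (hhom i), fun i =>
      Ideal.mem_map_of_mem π (Ideal.le_colon (hfI i))⟩
  choose J hJX hJ using hslice
  have hJmono (d : ℕ) : Monotone fun j => hilb (J j) d := fun i j hij =>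
    calc hilb (J i) d
      _ = hilb ((I.colon {g ^ i}).map π) d := (hJ i d).symm
      _ ≤ hilb ((I.colon {g ^ j}).map π) d := hilb_mono (Ideal.map_mono (colon_pow_mono I g hij)) d
      _ = hilb (J j) d := hJ j d
  obtain ⟨L, hLX, hL⟩ := exists_hilb_eq_sum hmono hJX hJmono
  refine ⟨L, hLX, fun d => ?_⟩
  rw [hπ.hilb_eq_sum hI, hL]
  exact Finset.sum_congr rfl fun j _ => hJ j (d - j)

/-- the inductive step: `EGH_{n,a,r}` implies `EGH_{n+1,a,r}`. -/
theorem stmt13 {K : Type} [Field K] [Infinite K] {n r : ℕ} (hr : r ≤ n)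
    (a : Fin r → ℕ) (ha2 : ∀ i, 2 ≤ a i) (hmono : Monotone a)
    (hEGH : EGHnr K n r hr a) :
    EGHnr K (n + 1) r (hr.trans n.le_succ) a :=
  stmt13_general hr a hmono hEGH
end

section
/- For any Hilbert function of a homogeneous ideal of k[x_1,...,x_n] containing the monomial ideal (x_1^{a_1},...,x_k^{a_k}) (k ≤ n), the unique lexicographic-type construction: there is a monomial ideal containing x_1^{a_1},...,x_k^{a_k} with this Hilbert function whose standard monomials in each degree d are the H(S/I,d) lexicographically smallest monomials of degree d not divisible by any x_i^{a_i}, i ≤ k. -/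
open MvPolynomial

/-!
Passing to leading monomials of forms replaces the ideal by an upper set `P` of exponents with the
same Hilbert function, containing every exponent outside the box cut out by the pure powers. In each
degree, the part of `P` inside the box is replaced by the lex-segment of the same size. The result
is again an upper set because, among the sets of given size in a layer of the box, the lex-segment
has the smallest shadow, which is itself a lex-segment.

That inequality is proved by induction on the number of variables. Fixing the exponent of one
variable and replacing the resulting slices of a set by lex-segments does not enlarge its shadow, by
the induction hypothesis. In at least three variables, a set that is stable under all of these
compressions but is not a lex-segment contains an exponent `v` that is lex-smaller than some missing
exponent `u`; for the smallest such `v` and the largest such `u`, the last exponent of `v` is less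
than that of `u`, and exchanging `v` for `u` at most trades `v * x_n` for `u * x_n` in the shadow.
All these operations move the set upwards in the colexicographic order, so that a colex-maximal set
of given size, among those whose shadow is no larger than the original one, is a lex-segment. Two
variables are treated directly.
-/

namespace ClementsLindstrom

section Segments

open Finset

variable {α β γ : Type*} [LinearOrder β] {f : α → β} {g : α → γ} {s t u : Finset α} {c : ℕ}

/-- `t` consists of the elements of `s` with the largest keys `f`: with `f = toLex`, these are the
lex-segments of a set of exponents. -/
def IsTopSegment (f : α → β) (s t : Finset α) : Prop :=
  t ⊆ s ∧ ∀ ⦃x⦄, x ∈ t → ∀ ⦃y⦄, y ∈ s → f x < f y → y ∈ t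

theorem IsTopSegment.subset_of_card_le (hf : f.Injective) (ht : IsTopSegment f s t)
    (hu : IsTopSegment f s u) (h : #t ≤ #u) : t ⊆ u := by
  by_contra htu
  obtain ⟨x, hxt, hxu⟩ := not_subset.1 htu
  have hut : u ⊆ t := fun y hy => by
    have hne : f x ≠ f y := fun hxy => hxu (hf hxy ▸ hy)
    refine ht.2 hxt (hu.1 hy) (hne.lt_or_gt.resolve_right fun hlt => hxu ?_)
    exact hu.2 hy (ht.1 hxt) hlt
  exact hxu (eq_of_subset_of_card_le hut h ▸ hxt)

theorem IsTopSegment.eq_of_card_eq (hf : f.Injective) (ht : IsTopSegment f s t)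
    (hu : IsTopSegment f s u) (h : #t = #u) : t = u :=
  (ht.subset_of_card_le hf hu h.le).antisymm (hu.subset_of_card_le hf ht h.ge)

theorem isTopSegment_image {δ α' : Type*} [LinearOrder δ] [DecidableEq α'] {k : α' → δ}
    {e : α → α'} (he : e.Injective) (hlt : ∀ x y, k (e x) < k (e y) ↔ f x < f y) :
    IsTopSegment k (s.image e) (t.image e) ↔ IsTopSegment f s t := by
  simp only [IsTopSegment, image_subset_image_iff he, forall_mem_image, hlt,
    he.mem_finset_image]

/-- The `c` elements of `s` with the largest keys `f` (all of `s` if `#s < c`), when `f` is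
injective. -/
def topSegment (f : α → β) (s : Finset α) (c : ℕ) : Finset α :=
  {x ∈ s | #{y ∈ s | f x < f y} < c}

theorem isTopSegment_topSegment : IsTopSegment f s (topSegment f s c) := by
  refine ⟨filter_subset _ _, fun x hx y hy hxy => mem_filter.2 ⟨hy, ?_⟩⟩
  refine (card_le_card fun z hz => ?_).trans_lt (mem_filter.1 hx).2
  exact mem_filter.2 ⟨(mem_filter.1 hz).1, hxy.trans (mem_filter.1 hz).2⟩

theorem IsTopSegment.subset_topSegment (ht : IsTopSegment f s t) (h : #t ≤ c) :
    t ⊆ topSegment f s c := by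
  refine fun x hx => mem_filter.2 ⟨ht.1 hx, (card_lt_card ?_).trans_le h⟩
  refine Finset.ssubset_iff_subset_ne.2 ⟨fun y hy => ?_, fun heq => ?_⟩
  · exact ht.2 hx (mem_filter.1 hy).1 (mem_filter.1 hy).2
  · have hxx : x ∈ ({y ∈ s | f x < f y} : Finset α) := heq ▸ hx
    exact lt_irrefl _ (mem_filter.1 hxx).2

theorem card_topSegment (hf : f.Injective) (hc : c ≤ #s) : #(topSegment f s c) = c := by
  set rank : α → ℕ := fun x => #{y ∈ s | f x < f y}
  have rank_lt {x y : α} (hy : y ∈ s) (hxy : f x < f y) : rank y < rank x := by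
    refine card_lt_card (Finset.ssubset_iff_subset_ne.2 ⟨fun z hz => ?_, fun heq => ?_⟩)
    · exact mem_filter.2 ⟨(mem_filter.1 hz).1, hxy.trans (mem_filter.1 hz).2⟩
    · have hyy : y ∈ ({z ∈ s | f y < f z} : Finset α) := heq ▸ mem_filter.2 ⟨hy, hxy⟩
      exact lt_irrefl _ (mem_filter.1 hyy).2
  have rank_inj : Set.InjOn rank s := fun x hx y hy hxy => hf <| by
    by_contra hne
    rcases lt_or_gt_of_ne hne with hlt | hlt
    exacts [(rank_lt hy hlt).ne' hxy, (rank_lt hx hlt).ne hxy]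
  have image_rank : s.image rank = range #s := by
    refine eq_of_subset_of_card_le (image_subset_iff.2 fun x hx => mem_range.2 ?_) ?_
    · refine card_lt_card (filter_ssubset.2 ⟨x, hx, lt_irrefl _⟩)
    · rw [card_image_of_injOn rank_inj, card_range]
  have image_topSegment : (topSegment f s c).image rank = range c := by
    rw [topSegment, ← filter_image (p := (· < c)), image_rank]
    ext m
    simp only [mem_filter, mem_range]
    omega
  have card_image_topSegment := card_image_of_injOn (s := topSegment f s c)
    (rank_inj.mono (filter_subset _ _))
  rw [← card_image_topSegment, image_topSegment, card_range]

variable [DecidableEq α] [DecidableEq γ]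

/-- Replaces each fibre of `g` in `t` by the top segment of the same size of the corresponding
fibre in `s`. -/
def compress (f : α → β) (g : α → γ) (s t : Finset α) : Finset α :=
  {x ∈ s | x ∈ topSegment f {y ∈ s | g y = g x} #{y ∈ t | g y = g x}}

theorem compress_subset : compress f g s t ⊆ s := filter_subset _ _

theorem filter_compress (z : γ) :
    {x ∈ compress f g s t | g x = z} = topSegment f {y ∈ s | g y = z} #{y ∈ t | g y = z} := by
  ext x
  simp only [compress, mem_filter]
  constructor
  · rintro ⟨⟨-, hx⟩, rfl⟩
    exact hx
  · intro hx
    obtain ⟨hxs, rfl⟩ := mem_filter.1 (mem_filter.1 hx).1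
    exact ⟨⟨hxs, hx⟩, rfl⟩

theorem card_filter_compress (hf : f.Injective) (hts : t ⊆ s) (z : γ) :
    #{x ∈ compress f g s t | g x = z} = #{x ∈ t | g x = z} := by
  rw [filter_compress, card_topSegment hf (card_le_card (filter_subset_filter _ hts))]

theorem card_compress (hf : f.Injective) (hts : t ⊆ s) : #(compress f g s t) = #t := by
  have maps {u : Finset α} (hu : u ⊆ s) : Set.MapsTo g u (s.image g) := fun x hx =>
    mem_coe.2 (mem_image_of_mem g (hu hx))
  rw [card_eq_sum_card_fiberwise (maps compress_subset), card_eq_sum_card_fiberwise (maps hts)]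
  exact sum_congr rfl fun z _ => card_filter_compress hf hts z

theorem IsTopSegment.mem_compress {x : α} (hu : IsTopSegment f {y ∈ s | g y = g x} u)
    (hcard : #u ≤ #{y ∈ t | g y = g x}) (hx : x ∈ u) : x ∈ compress f g s t :=
  mem_filter.2 ⟨(mem_filter.1 (hu.1 hx)).1, hu.subset_topSegment hcard hx⟩

theorem mem_of_compress_eq_self (h : compress f g s t = t) {x y : α} (hx : x ∈ t) (hy : y ∈ s)
    (hg : g y = g x) (hxy : f x < f y) : y ∈ t := by
  have hseg : IsTopSegment f {z ∈ s | g z = g x} {z ∈ t | g z = g x} := by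
    conv_rhs => rw [← h, filter_compress]
    exact isTopSegment_topSegment
  exact (mem_filter.1 (hseg.2 (mem_filter.2 ⟨hx, rfl⟩) (mem_filter.2 ⟨hy, hg⟩) hxy)).1

variable [DecidableEq β]

theorem toColex_image_le_compress (hf : f.Injective) (hts : t ⊆ s) :
    toColex (t.image f) ≤ toColex ((compress f g s t).image f) := by
  refine Colex.toColex_le_toColex.2 ?_
  simp only [forall_mem_image, exists_mem_image, hf.mem_finset_image]
  intro x hx hxc
  set T : Finset α := {y ∈ t | g y = g x}
  set C : Finset α := {y ∈ compress f g s t | g y = g x} with hC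
  have hxT : x ∈ T := mem_filter.2 ⟨hx, rfl⟩
  have hxC : x ∉ C := fun h => hxc (mem_filter.1 h).1
  have hCT : ¬ C ⊆ T := fun h =>
    hxC (eq_of_subset_of_card_le h (card_filter_compress hf hts _).ge ▸ hxT)
  obtain ⟨y, hyC, hyT⟩ := not_subset.1 hCT
  obtain ⟨hyc, hyg⟩ := mem_filter.1 hyC
  refine ⟨y, hyc, fun hy => hyT (mem_filter.2 ⟨hy, hyg⟩), not_lt.1 fun hlt => hxC ?_⟩
  have hseg : IsTopSegment f {y ∈ s | g y = g x} C := by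
    rw [hC, filter_compress]
    exact isTopSegment_topSegment
  exact hseg.2 hyC (mem_filter.2 ⟨hts hx, rfl⟩) hlt

theorem toColex_image_lt_insert_erase (hf : f.Injective) {x y : α} (hy : y ∉ t)
    (hxy : f x < f y) : toColex (t.image f) < toColex ((insert y (t.erase x)).image f) := by
  refine lt_of_le_of_ne (Colex.toColex_le_toColex.2 ?_) fun heq => ?_
  · simp only [forall_mem_image, exists_mem_image, hf.mem_finset_image]
    intro z hz hz'
    obtain rfl : z = x := by
      by_contra hne
      exact hz' (mem_insert_of_mem (mem_erase.2 ⟨hne, hz⟩))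
    exact ⟨y, mem_insert_self _ _, hy, hxy.le⟩
  · exact hy (image_injective hf (toColex.injective heq) ▸ mem_insert_self _ _)

end Segments

section Box

open Finset

variable {n d : ℕ} {a : Fin n → ℕ∞} {A S : Finset (Fin n → ℕ)} {i j : Fin n} {v w y z : Fin n → ℕ}

/-- The exponents of the monomials divisible by no `x_i ^ a i`, where `a i = ⊤` means that the
exponent of `x_i` is unrestricted. -/
def box (a : Fin n → ℕ∞) : Set (Fin n → ℕ) :=
  {w | ∀ i, (w i : ℕ∞) < a i}

theorem isLowerSet_box : IsLowerSet (box a) :=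
  fun _ _ hle hw i => (Nat.cast_le.2 (hle i)).trans_lt (hw i)

theorem add_single_mem_box (hv : v ∈ box a) (hj : ((v j + 1 : ℕ) : ℕ∞) < a j) :
    v + Pi.single j 1 ∈ box a := by
  intro k
  rcases eq_or_ne k j with rfl | hk
  · simpa using hj
  · simpa [hk] using hv k

open Classical in
/-- The exponents of degree `d` in `box a`. -/
noncomputable def boxLayer (a : Fin n → ℕ∞) (d : ℕ) : Finset (Fin n → ℕ) :=
  {w ∈ piAntidiag univ d | w ∈ box a}

theorem mem_boxLayer : w ∈ boxLayer a d ↔ w ∈ box a ∧ ∑ i, w i = d := by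
  simp [boxLayer, and_comm]

open Classical in
/-- The exponents in `box a` of the monomials `x_j * m`, where `m` has its exponent in `A`. -/
noncomputable def boxShadow (a : Fin n → ℕ∞) (A : Finset (Fin n → ℕ)) : Finset (Fin n → ℕ) :=
  {w ∈ A.biUnion fun v => univ.image fun j => v + Pi.single j 1 | w ∈ box a}

theorem mem_boxShadow :
    w ∈ boxShadow a A ↔ w ∈ box a ∧ ∃ v ∈ A, ∃ j, v + Pi.single j 1 = w := by
  simp [boxShadow, and_comm]

theorem sum_add_single (v : Fin n → ℕ) (j : Fin n) :
    ∑ k, (v + Pi.single j 1 : Fin n → ℕ) k = ∑ k, v k + 1 := by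
  simp [sum_add_distrib]

theorem exists_add_single_eq (hj : v j ≠ 0) : ∃ y : Fin n → ℕ, y + Pi.single j 1 = v := by
  refine ⟨v - Pi.single j 1, tsub_add_cancel_of_le fun k => ?_⟩
  rcases eq_or_ne k j with rfl | hk
  · simpa using Nat.one_le_iff_ne_zero.2 hj
  · simp [hk]

theorem mem_boxLayer_of_add_single_mem (h : v + Pi.single j 1 ∈ boxLayer a (d + 1)) :
    v ∈ boxLayer a d := by
  obtain ⟨hbox, hsum⟩ := mem_boxLayer.1 h
  rw [sum_add_single] at hsum
  exact mem_boxLayer.2 ⟨isLowerSet_box le_self_add hbox, Nat.succ_injective hsum⟩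

theorem add_single_mem_boxLayer (hv : v ∈ boxLayer a d) (hj : ((v j + 1 : ℕ) : ℕ∞) < a j) :
    v + Pi.single j 1 ∈ boxLayer a (d + 1) := by
  obtain ⟨hbox, hsum⟩ := mem_boxLayer.1 hv
  exact mem_boxLayer.2 ⟨add_single_mem_box hbox hj, by rw [sum_add_single, hsum]⟩

theorem boxShadow_subset (hA : A ⊆ boxLayer a d) : boxShadow a A ⊆ boxLayer a (d + 1) := by
  intro w hw
  obtain ⟨hbox, v, hv, j, rfl⟩ := mem_boxShadow.1 hw
  exact mem_boxLayer.2 ⟨hbox, by rw [sum_add_single, (mem_boxLayer.1 (hA hv)).2]⟩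

theorem toLex_lt_of_add_single_eq (hij : i < j) (h : z + Pi.single j 1 = y + Pi.single i 1) :
    toLex y < toLex z := by
  refine ⟨i, fun k hk => ?_, ?_⟩
  · simpa [hk.ne, (hk.trans hij).ne] using (congrFun h k).symm
  · have hi : z i = y i + 1 := by simpa [hij.ne] using congrFun h i
    exact (Nat.lt_succ_self (y i)).trans_eq hi.symm

theorem toLex_le_of_toLex_add_single_lt {k : Fin n} (hz : ∀ l, k < l → z l = 0)
    (hsum : ∑ i, y i = ∑ i, z i)
    (hlt : toLex (y + Pi.single j 1) < toLex (z + Pi.single k 1)) : toLex y ≤ toLex z := by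
  by_contra! hzy
  obtain ⟨t, heq, ht⟩ := id hzy
  rcases lt_or_ge t k with htk | hkt
  · have hzk : toLex (z + Pi.single k 1) < toLex y :=
      ⟨t, fun l hl => by simpa [(hl.trans htk).ne] using heq l hl, by simpa [htk.ne] using ht⟩
    have hyj : toLex y ≤ toLex (y + Pi.single j 1) := Pi.toLex_monotone le_self_add
    exact lt_irrefl _ ((hzk.trans_le hyj).trans hlt)
  · refine (sum_lt_sum (fun l _ => ?_) ⟨t, mem_univ t, ht⟩).ne' hsum
    rcases lt_trichotomy l t with hl | rfl | hl
    · exact (heq l hl).le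
    · exact ht.le
    · exact (hz l (hkt.trans_lt hl)).trans_le (Nat.zero_le _)

theorem isTopSegment_boxShadow (hS : IsTopSegment toLex (boxLayer a d) S) :
    IsTopSegment toLex (boxLayer a (d + 1)) (boxShadow a S) := by
  refine ⟨boxShadow_subset hS.1, fun w hw w' hw' hlt => ?_⟩
  obtain ⟨-, y, hy, j, rfl⟩ := mem_boxShadow.1 hw
  have hsupp : ({k | w' k ≠ 0} : Finset (Fin n)).Nonempty := by
    obtain ⟨i, -, hi⟩ := id hlt
    exact ⟨i, mem_filter.2 ⟨mem_univ i, (Nat.zero_le _).trans_lt hi |>.ne'⟩⟩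
  -- Removing the last variable of a monomial leaves the lex-largest of its maximal proper divisors.
  obtain ⟨k, hk, hmax⟩ := exists_max_image _ id hsupp
  obtain ⟨z, rfl⟩ := exists_add_single_eq (mem_filter.1 hk).2
  have hz : z ∈ boxLayer a d := mem_boxLayer_of_add_single_mem hw'
  have hzero : ∀ l, k < l → z l = 0 := fun l hl => by
    by_contra hne
    exact hl.not_ge (hmax l (mem_filter.2 ⟨mem_univ l, by simp [hne]⟩))
  have hsum : ∑ i, y i = ∑ i, z i :=
    (mem_boxLayer.1 (hS.1 hy)).2.trans (mem_boxLayer.1 hz).2.symm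
  have hzS : z ∈ S := by
    rcases (toLex_le_of_toLex_add_single_lt hzero hsum hlt).eq_or_lt with h | h
    · exact toLex.injective h ▸ hy
    · exact hS.2 hy hz h
  exact mem_boxShadow.2 ⟨(mem_boxLayer.1 hw').1, z, hzS, k, rfl⟩

end Box

section Compression

open Finset

variable {n d m y : ℕ} {a : Fin (n + 1) → ℕ∞} {A : Finset (Fin (n + 1) → ℕ)} {i : Fin (n + 1)}
  {v w : Fin n → ℕ}

theorem toLex_insertNth_lt_toLex_insertNth :
    toLex (i.insertNth y v : Fin (n + 1) → ℕ) < toLex (i.insertNth y w : Fin (n + 1) → ℕ) ↔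
      toLex v < toLex w := by
  constructor
  · rintro ⟨t, heq, hlt⟩
    obtain rfl | ⟨k, rfl⟩ := Fin.eq_self_or_eq_succAbove i t
    · simp at hlt
    · refine ⟨k, fun j hj => ?_, by simpa using hlt⟩
      simpa using heq (i.succAbove j) (Fin.strictMono_succAbove i hj)
  · rintro ⟨k, heq, hlt⟩
    refine ⟨i.succAbove k, fun j hj => ?_, by simpa using hlt⟩
    obtain rfl | ⟨j, rfl⟩ := Fin.eq_self_or_eq_succAbove i j
    · simp
    · simpa using heq j ((Fin.strictMono_succAbove i).lt_iff_lt.1 hj)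

theorem insertNth_add_single (v : Fin n → ℕ) (j : Fin n) :
    (i.insertNth y v + Pi.single (i.succAbove j) 1 : Fin (n + 1) → ℕ) =
      i.insertNth y (v + Pi.single j 1) := by
  funext k
  obtain rfl | ⟨k, rfl⟩ := Fin.eq_self_or_eq_succAbove i k
  · simp [(Fin.succAbove_ne k j).symm]
  · simp [Pi.single_apply]

theorem insertNth_mem_box :
    (i.insertNth y v : Fin (n + 1) → ℕ) ∈ box a ↔ (y : ℕ∞) < a i ∧ v ∈ box (i.removeNth a) := by
  simp [box, Fin.forall_iff_succAbove i, Fin.removeNth]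

theorem insertNth_mem_boxLayer :
    (i.insertNth y v : Fin (n + 1) → ℕ) ∈ boxLayer a (y + m) ↔
      (y : ℕ∞) < a i ∧ v ∈ boxLayer (i.removeNth a) m := by
  simp [mem_boxLayer, insertNth_mem_box, Fin.sum_univ_succAbove _ i, and_assoc]

theorem filter_boxLayer_eq_image_insertNth (hy : (y : ℕ∞) < a i) :
    {w ∈ boxLayer a (y + m) | w i = y} =
      (boxLayer (i.removeNth a) m).image (Fin.insertNth (α := fun _ => ℕ) i y) := by
  ext w
  simp only [mem_filter, mem_image]
  constructor
  · rintro ⟨hw, rfl⟩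
    have hw' : (i.insertNth (w i) (i.removeNth w) : Fin (n + 1) → ℕ) ∈ boxLayer a (w i + m) := by
      rwa [Fin.insertNth_self_removeNth]
    exact ⟨_, (insertNth_mem_boxLayer.1 hw').2, Fin.insertNth_self_removeNth i w⟩
  · rintro ⟨v, hv, rfl⟩
    exact ⟨insertNth_mem_boxLayer.2 ⟨hy, hv⟩, Fin.insertNth_apply_same _ _ _⟩

theorem exists_image_insertNth_eq_filter (hy : (y : ℕ∞) < a i) (hA : A ⊆ boxLayer a (y + m)) :
    ∃ A' ⊆ boxLayer (i.removeNth a) m,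
      A'.image (Fin.insertNth (α := fun _ => ℕ) i y) = {w ∈ A | w i = y} := by
  rw [← subset_image_iff, ← filter_boxLayer_eq_image_insertNth hy]
  exact filter_subset_filter _ hA

theorem image_insertNth_boxShadow_subset (hy : (y : ℕ∞) < a i) {A' : Finset (Fin n → ℕ)}
    (hA' : A'.image (Fin.insertNth (α := fun _ => ℕ) i y) ⊆ A) :
    (boxShadow (i.removeNth a) A').image (Fin.insertNth (α := fun _ => ℕ) i y) ⊆
      {w ∈ boxShadow a A | w i = y} := by
  refine image_subset_iff.2 fun u hu => ?_
  obtain ⟨hu, z, hz, j, rfl⟩ := mem_boxShadow.1 hu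
  refine mem_filter.2 ⟨mem_boxShadow.2 ⟨insertNth_mem_box.2 ⟨hy, hu⟩, _,
    hA' (mem_image_of_mem _ hz), i.succAbove j, insertNth_add_single z j⟩, ?_⟩
  exact Fin.insertNth_apply_same _ _ _

theorem filter_boxLayer_succ_eq_image_add_single (hy : ((y + 1 : ℕ) : ℕ∞) < a i) :
    {w ∈ boxLayer a (d + 1) | w i = y + 1} =
      ({w ∈ boxLayer a d | w i = y} : Finset _).image (· + Pi.single i 1) := by
  ext w
  simp only [mem_filter, mem_image]
  constructor
  · rintro ⟨hw, hwi⟩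
    obtain ⟨v, rfl⟩ := exists_add_single_eq (v := w) (j := i) (by lia)
    exact ⟨v, ⟨mem_boxLayer_of_add_single_mem hw, by simpa using hwi⟩, rfl⟩
  · rintro ⟨v, ⟨hv, rfl⟩, rfl⟩
    exact ⟨add_single_mem_boxLayer hv hy, by simp⟩

/-- The combinatorial Clements–Lindström inequality in `n` variables: among the sets of exponents
of given size in a layer of `box a`, the lex-segment has the smallest shadow. -/
def ShadowInequality (n : ℕ) : Prop :=
  ∀ ⦃a : Fin n → ℕ∞⦄, Monotone a → ∀ ⦃d : ℕ⦄ ⦃A S : Finset (Fin n → ℕ)⦄, A ⊆ boxLayer a d →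
    IsTopSegment toLex (boxLayer a d) S → #S = #A → #(boxShadow a S) ≤ #(boxShadow a A)

/-- In the layer of degree `d` of `box a`, replaces each slice of `A` on which the exponent of `x_i`
is constant by a lex-segment of the same size. -/
noncomputable abbrev compressLayer (a : Fin n → ℕ∞) (d : ℕ) (i : Fin n)
    (A : Finset (Fin n → ℕ)) : Finset (Fin n → ℕ) :=
  compress toLex (· i) (boxLayer a d) A

theorem add_single_mem_compressLayer {v : Fin (n + 1) → ℕ} (hA : A ⊆ boxLayer a d)
    (hv : v ∈ compressLayer a d i A) (hw : v + Pi.single i 1 ∈ box a) :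
    v + Pi.single i 1 ∈ compressLayer a (d + 1) i (boxShadow a A) := by
  have hi : ((v i + 1 : ℕ) : ℕ∞) < a i := by simpa using hw i
  have hinj : Function.Injective fun z : Fin (n + 1) → ℕ => z + Pi.single i 1 :=
    add_left_injective _
  set C : Finset (Fin (n + 1) → ℕ) := {z ∈ compressLayer a d i A | z i = v i} with hC
  have hseg : IsTopSegment toLex {z ∈ boxLayer a (d + 1) | z i = v i + 1}
      (C.image (· + Pi.single i 1)) := by
    rw [filter_boxLayer_succ_eq_image_add_single hi, isTopSegment_image hinj
      fun x z => add_lt_add_iff_right (toLex (Pi.single i 1 : Fin (n + 1) → ℕ)), hC,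
      filter_compress]
    exact isTopSegment_topSegment
  have hcard : #(C.image (· + Pi.single i 1)) ≤ #{z ∈ boxShadow a A | z i = v i + 1} := by
    rw [card_image_of_injective _ hinj, hC, card_filter_compress toLex.injective hA,
      ← card_image_of_injective _ hinj]
    refine card_le_card (image_subset_iff.2 fun z hz => ?_)
    obtain ⟨hzA, hzi⟩ := mem_filter.1 hz
    have hzbox : z + Pi.single i 1 ∈ box a :=
      add_single_mem_box (mem_boxLayer.1 (hA hzA)).1 (by rwa [hzi])
    exact mem_filter.2 ⟨mem_boxShadow.2 ⟨hzbox, z, hzA, i, rfl⟩, by simp [hzi]⟩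
  refine IsTopSegment.mem_compress (u := C.image (· + Pi.single i 1)) ?_ ?_ ?_
  · simpa using hseg
  · simpa using hcard
  · exact mem_image_of_mem _ (mem_filter.2 ⟨hv, rfl⟩)

theorem insertNth_mem_compressLayer (ih : ShadowInequality n) (ha : Monotone a)
    (hA : A ⊆ boxLayer a (y + m)) (hv : i.insertNth y v ∈ compressLayer a (y + m) i A)
    {j : Fin n} (hj : v + Pi.single j 1 ∈ box (i.removeNth a)) :
    i.insertNth y (v + Pi.single j 1) ∈ compressLayer a (y + (m + 1)) i (boxShadow a A) := by
  set e : (Fin n → ℕ) → Fin (n + 1) → ℕ := Fin.insertNth (α := fun _ => ℕ) i y with he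
  have hinj : e.Injective := Fin.insertNth_right_injective (α := fun _ => ℕ) y
  have hyi : (y : ℕ∞) < a i := (insertNth_mem_boxLayer.1 (compress_subset hv)).1
  obtain ⟨A', hA', hAA'⟩ := exists_image_insertNth_eq_filter hyi hA
  obtain ⟨C', -, hCC'⟩ := exists_image_insertNth_eq_filter hyi
    (compress_subset (f := toLex) (g := (· i)) (t := A))
  have isTopSegment_image_insertNth (s t : Finset (Fin n → ℕ)) :
      IsTopSegment toLex (s.image e) (t.image e) ↔ IsTopSegment toLex s t :=
    isTopSegment_image hinj fun _ _ => toLex_insertNth_lt_toLex_insertNth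
  have hC'seg : IsTopSegment toLex (boxLayer (i.removeNth a) m) C' := by
    rw [← isTopSegment_image_insertNth, hCC', filter_compress,
      ← filter_boxLayer_eq_image_insertNth hyi]
    exact isTopSegment_topSegment
  have hcard : #C' = #A' := by
    rw [← card_image_of_injective C' hinj, ← card_image_of_injective A' hinj, hCC', hAA',
      card_filter_compress toLex.injective hA]
  have hvC' : v ∈ C' := by
    rw [← hinj.mem_finset_image, hCC']
    exact mem_filter.2 ⟨hv, Fin.insertNth_apply_same _ _ _⟩
  refine IsTopSegment.mem_compress (u := (boxShadow (i.removeNth a) C').image e) ?_ ?_ ?_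
  · simp only [he, Fin.insertNth_apply_same]
    rw [filter_boxLayer_eq_image_insertNth hyi, isTopSegment_image_insertNth]
    exact isTopSegment_boxShadow hC'seg
  · simp only [he, Fin.insertNth_apply_same]
    calc #((boxShadow (i.removeNth a) C').image e)
      _ = #(boxShadow (i.removeNth a) C') := card_image_of_injective _ hinj
      _ ≤ #(boxShadow (i.removeNth a) A') :=
        ih (ha.comp (Fin.strictMono_succAbove i).monotone) hA' hC'seg hcard
      _ = #((boxShadow (i.removeNth a) A').image e) := (card_image_of_injective _ hinj).symm
      _ ≤ #{z ∈ boxShadow a A | z i = y} :=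
        card_le_card (image_insertNth_boxShadow_subset hyi (hAA'.trans_subset (filter_subset _ _)))
  · exact mem_image_of_mem e (mem_boxShadow.2 ⟨hj, v, hvC', j, rfl⟩)

theorem card_boxShadow_compressLayer_le (ih : ShadowInequality n) (ha : Monotone a)
    (hA : A ⊆ boxLayer a d) (i : Fin (n + 1)) :
    #(boxShadow a (compressLayer a d i A)) ≤ #(boxShadow a A) := by
  rw [← card_compress (f := toLex) (g := (· i)) toLex.injective (boxShadow_subset hA)]
  refine card_le_card fun w hw => ?_
  obtain ⟨hwbox, v, hv, j, rfl⟩ := mem_boxShadow.1 hw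
  obtain rfl | ⟨j, rfl⟩ := Fin.eq_self_or_eq_succAbove i j
  · exact add_single_mem_compressLayer hA hv hwbox
  · obtain ⟨y, v, rfl⟩ : ∃ y v', v = (i.insertNth y v' : Fin (n + 1) → ℕ) :=
      ⟨_, _, (Fin.insertNth_self_removeNth i v).symm⟩
    rw [insertNth_add_single] at hwbox ⊢
    obtain rfl : y + ∑ k, v k = d := by
      simpa [Fin.sum_univ_succAbove _ i] using (mem_boxLayer.1 (compress_subset hv)).2
    exact insertNth_mem_compressLayer ih ha hA hv (insertNth_mem_box.1 hwbox).2

end Compression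

section Exchange

open Finset

variable {n d : ℕ}

/-- Every slice of `A` on which the exponent of one variable is constant is a lex-segment of the
corresponding slice of the layer of degree `d` of `box a`. -/
def IsCompressed (a : Fin n → ℕ∞) (d : ℕ) (A : Finset (Fin n → ℕ)) : Prop :=
  ∀ i, ∀ ⦃v⦄, v ∈ A → ∀ ⦃u⦄, u ∈ boxLayer a d → u i = v i → toLex v < toLex u → u ∈ A

theorem isCompressed_of_compressLayer_eq {a : Fin n → ℕ∞} {A : Finset (Fin n → ℕ)}
    (h : ∀ i, compressLayer a d i A = A) : IsCompressed a d A :=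
  fun i _ hv _ hu huv hlt => mem_of_compress_eq_self (h i) hv hu huv hlt

theorem IsCompressed.add_single_mem {a : Fin n → ℕ∞} {A : Finset (Fin n → ℕ)}
    (hc : IsCompressed a d A) (hA : A ⊆ boxLayer a d) (hn : 2 < n) {i j : Fin n} (hij : i < j)
    {w : Fin n → ℕ} (hw : w + Pi.single j 1 ∈ A) (hi : ((w i + 1 : ℕ) : ℕ∞) < a i) :
    w + Pi.single i 1 ∈ A := by
  obtain ⟨k, hki, hkj⟩ := Fin.exists_ne_and_ne_of_two_lt i j hn
  obtain ⟨hbox, hsum⟩ := mem_boxLayer.1 (hA hw)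
  have hlayer : w + Pi.single i 1 ∈ boxLayer a d := by
    refine mem_boxLayer.2 ⟨add_single_mem_box (isLowerSet_box le_self_add hbox) hi, ?_⟩
    rw [sum_add_single, ← hsum, sum_add_single]
  refine hc k hw hlayer (by simp [hki, hkj]) (toLex_lt_of_add_single_eq hij ?_)
  exact add_right_comm _ _ _

theorem exists_toLex_add_single_le {a : Fin (n + 2) → ℕ∞} {u w : Fin (n + 2) → ℕ}
    (hu : u ∈ box a) (hsum : ∑ i, u i = ∑ i, w i + 1) (h0 : w 0 < u 0)
    (hlast : u (Fin.last _) ≤ w (Fin.last _)) :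
    ∃ i ≠ Fin.last _, ((w i + 1 : ℕ) : ℕ∞) < a i ∧ toLex (w + Pi.single i 1) ≤ toLex u := by
  by_cases hmid : ∃ i, i ≠ 0 ∧ i ≠ Fin.last _ ∧ ((w i + 1 : ℕ) : ℕ∞) < a i
  · obtain ⟨i, hi0, hil, hia⟩ := hmid
    refine ⟨i, hil, hia, le_of_lt ⟨0, fun j hj => absurd hj (Fin.not_lt_zero j), ?_⟩⟩
    simpa [hi0.symm] using h0
  · push Not at hmid
    refine ⟨0, Fin.last_pos.ne, (Nat.cast_le.2 h0).trans_lt (hu 0), not_lt.1 fun hlt => ?_⟩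
    -- `u` divides `x_0 * w` and has the same degree, so the two monomials are equal.
    have hle (k : Fin (n + 2)) : u k ≤ (w + Pi.single 0 1 : Fin (n + 2) → ℕ) k := by
      by_cases hk0 : k = 0
      · subst hk0
        exact Pi.apply_le_of_toLex hlt.le fun j hj => absurd hj (Fin.not_lt_zero j)
      by_cases hkl : k = Fin.last _
      · simpa [hk0, hkl] using hlast
      · simpa [hk0] using Nat.lt_succ_iff.1 (Nat.cast_lt.1 ((hu k).trans_le (hmid k hk0 hkl)))
    have heq := (sum_eq_sum_iff_of_le fun k (_ : k ∈ univ) => hle k).1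
      (hsum.trans (sum_add_single w 0).symm)
    exact hlt.ne (congrArg toLex (funext fun k => heq k (mem_univ k)))

variable {a : Fin (n + 3) → ℕ∞} {A : Finset (Fin (n + 3) → ℕ)} {u w : Fin (n + 3) → ℕ}

theorem IsCompressed.exists_last_add_one_eq (hc : IsCompressed a d A) (hA : A ⊆ boxLayer a d)
    (hu : u ∈ boxLayer a d) (huA : u ∉ A) (hw : w ∈ A) (hwu : toLex w < toLex u)
    (hlast : u (Fin.last _) < w (Fin.last _)) :
    ∃ w' ∈ A, toLex w' < toLex u ∧ w' (Fin.last _) + 1 = w (Fin.last _) := by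
  obtain ⟨w, rfl⟩ := exists_add_single_eq (Nat.ne_zero_of_lt hlast)
  have hne : (0 : Fin (n + 3)) ≠ Fin.last _ := Fin.last_pos.ne
  have h0 : w 0 < u 0 := by
    have hle : w 0 ≤ u 0 := by
      simpa [hne] using Pi.apply_le_of_toLex hwu.le fun j hj => absurd hj (Fin.not_lt_zero j)
    exact hle.lt_of_ne fun h => huA (hc 0 hw hu (by simpa [hne] using h.symm) hwu)
  have hsum : ∑ i, u i = ∑ i, w i + 1 := by
    rw [(mem_boxLayer.1 hu).2, ← (mem_boxLayer.1 (hA hw)).2, sum_add_single]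
  obtain ⟨i, hi, hia, hle⟩ := exists_toLex_add_single_le (mem_boxLayer.1 hu).1 hsum h0
    (Nat.lt_succ_iff.1 (by simpa using hlast))
  have hwA : w + Pi.single i 1 ∈ A :=
    hc.add_single_mem hA (by lia) (Fin.lt_last_iff_ne_last.2 hi) hw hia
  refine ⟨_, hwA, hle.lt_of_ne fun h => huA (toLex.injective h ▸ hwA), ?_⟩
  simp [hi.symm]

theorem IsCompressed.last_lt (hc : IsCompressed a d A) (hA : A ⊆ boxLayer a d)
    (hu : u ∈ boxLayer a d) (huA : u ∉ A) (hw : w ∈ A) (hwu : toLex w < toLex u) :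
    w (Fin.last _) < u (Fin.last _) := by
  by_contra! hle
  obtain ⟨m, hm⟩ := Nat.exists_eq_add_of_le hle
  induction m generalizing w with
  | zero => exact huA (hc _ hw hu hm.symm hwu)
  | succ m ih =>
    obtain ⟨w', hw', hwu', heq⟩ := hc.exists_last_add_one_eq hA hu huA hw hwu (by lia)
    exact ih hw' hwu' (by lia) (by lia)

theorem boxShadow_insert_erase_subset {a : Fin (n + 1) → ℕ∞} {A : Finset (Fin (n + 1) → ℕ)}
    {u v : Fin (n + 1) → ℕ} (hu : u ∈ boxLayer a d)
    (hmax : ∀ x ∈ boxLayer a d, toLex u < toLex x → x ∈ A) (hmin : ∀ x ∈ A, toLex v ≤ toLex x)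
    (hvu : toLex v < toLex u) (hlast : u (Fin.last n) ≠ 0) :
    boxShadow a (insert u (A.erase v)) ⊆ insert (u + Pi.single (Fin.last n) 1)
      ((boxShadow a A).erase (v + Pi.single (Fin.last n) 1)) := by
  intro w hw
  obtain ⟨hbox, y, hy, j, rfl⟩ := mem_boxShadow.1 hw
  rw [mem_insert, mem_erase, mem_boxShadow]
  rcases mem_insert.1 hy with rfl | hy
  · by_cases hj : j = Fin.last n
    · exact Or.inl (by rw [hj])
    obtain ⟨z, rfl⟩ := exists_add_single_eq hlast
    rw [add_right_comm] at hbox ⊢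
    have hlt : toLex (z + Pi.single (Fin.last n) 1) < toLex (z + Pi.single j 1) :=
      toLex_lt_of_add_single_eq (Fin.lt_last_iff_ne_last.2 hj) (add_right_comm _ _ _)
    have hzA : z + Pi.single j 1 ∈ A := by
      refine hmax _ (mem_boxLayer.2 ⟨isLowerSet_box le_self_add hbox, ?_⟩) hlt
      rw [sum_add_single, ← (mem_boxLayer.1 hu).2, sum_add_single]
    refine Or.inr ⟨fun h => (hvu.trans hlt).ne' ?_, hbox, _, hzA, _, rfl⟩
    rw [add_right_cancel h]
  · obtain ⟨hyv, hyA⟩ := mem_erase.1 hy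
    refine Or.inr ⟨fun h => ?_, hbox, y, hyA, j, rfl⟩
    by_cases hj : j = Fin.last n
    · exact hyv (add_right_cancel (hj ▸ h))
    · exact (hmin y hyA).not_gt
        (toLex_lt_of_add_single_eq (Fin.lt_last_iff_ne_last.2 hj) h.symm)

theorem card_boxShadow_insert_erase_le {a : Fin (n + 1) → ℕ∞} {A : Finset (Fin (n + 1) → ℕ)}
    {u v : Fin (n + 1) → ℕ} (hA : A ⊆ boxLayer a d) (hu : u ∈ boxLayer a d) (hv : v ∈ A)
    (hmax : ∀ x ∈ boxLayer a d, toLex u < toLex x → x ∈ A) (hmin : ∀ x ∈ A, toLex v ≤ toLex x)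
    (hvu : toLex v < toLex u) (hlast : v (Fin.last n) < u (Fin.last n)) :
    #(boxShadow a (insert u (A.erase v))) ≤ #(boxShadow a A) := by
  have hv' : v + Pi.single (Fin.last n) 1 ∈ boxShadow a A := by
    refine mem_boxShadow.2 ⟨add_single_mem_box (mem_boxLayer.1 (hA hv)).1 ?_, v, hv, _, rfl⟩
    exact (Nat.cast_le.2 hlast).trans_lt ((mem_boxLayer.1 hu).1 _)
  calc #(boxShadow a (insert u (A.erase v)))
    _ ≤ #((boxShadow a A).erase (v + Pi.single (Fin.last n) 1)) + 1 :=
      (card_le_card (boxShadow_insert_erase_subset hu hmax hmin hvu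
        (Nat.ne_zero_of_lt hlast))).trans (card_insert_le _ _)
    _ = #(boxShadow a A) := card_erase_add_one hv'

theorem IsCompressed.exists_toColex_image_lt (hc : IsCompressed a d A) (hA : A ⊆ boxLayer a d)
    (hseg : ¬ IsTopSegment toLex (boxLayer a d) A) :
    ∃ B ⊆ boxLayer a d, #B = #A ∧ #(boxShadow a B) ≤ #(boxShadow a A) ∧
      toColex (A.image toLex) < toColex (B.image toLex) := by
  obtain ⟨v₀, hv₀, u₀, hu₀, hlt₀, hu₀A⟩ :
      ∃ v ∈ A, ∃ u ∈ boxLayer a d, toLex v < toLex u ∧ u ∉ A := by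
    by_contra! hcon
    exact hseg ⟨hA, hcon⟩
  obtain ⟨u, hu, hmax⟩ := exists_max_image (boxLayer a d \ A) toLex
    ⟨u₀, mem_sdiff.2 ⟨hu₀, hu₀A⟩⟩
  obtain ⟨v, hv, hmin⟩ := exists_min_image A toLex ⟨v₀, hv₀⟩
  obtain ⟨hu, huA⟩ := mem_sdiff.1 hu
  have hvu : toLex v < toLex u :=
    ((hmin v₀ hv₀).trans_lt hlt₀).trans_le (hmax u₀ (mem_sdiff.2 ⟨hu₀, hu₀A⟩))
  refine ⟨insert u (A.erase v), insert_subset hu ((erase_subset v A).trans hA), ?_, ?_,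
    toColex_image_lt_insert_erase toLex.injective huA hvu⟩
  · rw [card_insert_of_notMem fun h => huA (mem_of_mem_erase h), card_erase_add_one hv]
  · refine card_boxShadow_insert_erase_le hA hu hv (fun x hx hux => ?_) hmin hvu
      (hc.last_lt hA hu huA hv hvu)
    by_contra hxA
    exact (hmax x (mem_sdiff.2 ⟨hx, hxA⟩)).not_gt hux

theorem ShadowInequality.succ (ih : ShadowInequality (n + 2)) : ShadowInequality (n + 3) := by
  intro a ha d A₀ S hA₀ hS hcard
  obtain ⟨A, hA, hmax⟩ := exists_max_image
    {A ∈ (boxLayer a d).powerset | #A = #A₀ ∧ #(boxShadow a A) ≤ #(boxShadow a A₀)}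
    (fun A => toColex (A.image toLex)) ⟨A₀, by simp [hA₀]⟩
  simp only [mem_filter, mem_powerset, and_imp] at hA hmax
  obtain ⟨hA, hAcard, hAshadow⟩ := hA
  have hfix (i : Fin (n + 3)) : compressLayer a d i A = A := by
    have hle := hmax (compressLayer a d i A) compress_subset
      ((card_compress toLex.injective hA).trans hAcard)
      ((card_boxShadow_compressLayer_le ih ha hA i).trans hAshadow)
    have hge := toColex_image_le_compress (g := (· i)) toLex.injective hA
    exact image_injective toLex.injective (toColex.injective (hle.antisymm hge))
  have hAseg : IsTopSegment toLex (boxLayer a d) A := by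
    by_contra hseg
    obtain ⟨B, hB, hBcard, hBshadow, hlt⟩ :=
      (isCompressed_of_compressLayer_eq hfix).exists_toColex_image_lt hA hseg
    exact (hmax B hB (hBcard.trans hAcard) (hBshadow.trans hAshadow)).not_gt hlt
  rwa [hS.eq_of_card_eq toLex.injective hAseg (hcard.trans hAcard.symm)]

end Exchange

section ShadowInequality

open Finset

variable {n d : ℕ}

theorem shadowInequality_of_le_one (hn : n ≤ 1) : ShadowInequality n := by
  intro a _ d A S hA hS hcard
  have hsub : (boxLayer a d : Set (Fin n → ℕ)).Subsingleton := by
    intro v hv w hw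
    have : Subsingleton (Fin n) := Fin.subsingleton_iff_le_one.2 hn
    have hsum := (mem_boxLayer.1 hv).2.trans (mem_boxLayer.1 hw).2.symm
    funext i
    simpa [Fintype.sum_subsingleton _ i] using hsum
  have hAseg : IsTopSegment toLex (boxLayer a d) A :=
    ⟨hA, fun x hx y hy _ => hsub (hA hx) hy ▸ hx⟩
  rw [hS.eq_of_card_eq toLex.injective hAseg hcard]

variable {a : Fin 2 → ℕ∞} {A S : Finset (Fin 2 → ℕ)}

theorem boxShadow_subset_of_isTopSegment (hS : IsTopSegment toLex (boxLayer a d) S) :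
    boxShadow a S ⊆ insert (Pi.single 0 (d + 1)) (S.image (· + Pi.single 1 1)) := by
  intro w hw
  obtain ⟨hbox, y, hy, j, rfl⟩ := mem_boxShadow.1 hw
  have hlayer := boxShadow_subset hS.1 hw
  by_cases h1 : (y + Pi.single j 1 : Fin 2 → ℕ) 1 = 0
  · refine mem_insert.2 (Or.inl (funext fun k => ?_))
    have hsum := (mem_boxLayer.1 hlayer).2
    rw [Fin.sum_univ_two, h1] at hsum
    fin_cases k
    · simpa using hsum
    · simpa using h1
  · obtain ⟨z, hz⟩ := exists_add_single_eq h1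
    refine mem_insert_of_mem (mem_image.2 ⟨z, ?_, hz⟩)
    rw [← hz] at hlayer
    fin_cases j
    · exact hS.2 hy (mem_boxLayer_of_add_single_mem hlayer)
        (toLex_lt_of_add_single_eq Fin.zero_lt_one hz)
    · exact add_right_cancel hz ▸ hy

theorem card_lt_card_boxShadow (ha : Monotone a) (hd : ((d + 1 : ℕ) : ℕ∞) < a 0)
    (hA : A ⊆ boxLayer a d) (hne : A.Nonempty) : #A < #(boxShadow a A) := by
  have hmem {v : Fin 2 → ℕ} (hv : v ∈ A) (j : Fin 2) : v + Pi.single j 1 ∈ boxShadow a A := by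
    refine mem_boxShadow.2 ⟨add_single_mem_box (mem_boxLayer.1 (hA hv)).1 ?_, v, hv, j, rfl⟩
    have hle : v j ≤ d := (single_le_sum_of_canonicallyOrdered (mem_univ j)).trans_eq
      (mem_boxLayer.1 (hA hv)).2
    exact (Nat.cast_le.2 (Nat.succ_le_succ hle)).trans_lt (hd.trans_le (ha (Fin.zero_le j)))
  obtain ⟨x, hx, hmax⟩ := exists_max_image A (· 0) hne
  have hnotMem : x + Pi.single 0 1 ∉ A.image (· + Pi.single 1 1) := by
    intro h
    obtain ⟨y, hy, heq⟩ := mem_image.1 h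
    have h0 : y 0 = x 0 + 1 := by simpa using congrFun heq 0
    exact (hmax y hy).not_gt (by lia)
  calc #A
    _ = #(A.image (· + Pi.single 1 1)) := (card_image_of_injective _ (add_left_injective _)).symm
    _ < #(insert (x + Pi.single 0 1) (A.image (· + Pi.single 1 1))) := by
      rw [card_insert_of_notMem hnotMem]
      exact Nat.lt_succ_self _
    _ ≤ #(boxShadow a A) :=
      card_le_card (insert_subset (hmem hx 0) (image_subset_iff.2 fun v hv => hmem hv 1))

theorem card_le_card_boxShadow (hA : A ⊂ boxLayer a d) : #A ≤ #(boxShadow a A) := by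
  obtain ⟨x, hx, hxA⟩ := exists_of_ssubset hA
  obtain ⟨hxbox, hxsum⟩ := mem_boxLayer.1 hx
  rw [Fin.sum_univ_two] at hxsum
  -- Moving every exponent in `A` one step towards the missing exponent `x` is injective.
  let dir (y : Fin 2 → ℕ) : Fin 2 := if x 0 < y 0 then 1 else 0
  have hsum {y : Fin 2 → ℕ} (hy : y ∈ A) : y 0 + y 1 = d := by
    rw [← (mem_boxLayer.1 (hA.1 hy)).2, Fin.sum_univ_two]
  have hlt {y : Fin 2 → ℕ} (hy : y ∈ A) : y (dir y) < x (dir y) := by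
    have hne : y 0 ≠ x 0 := fun h0 => hxA <| by
      have h1 : y 1 = x 1 := by have := hsum hy; lia
      have hyx : y = x := funext (Fin.forall_fin_two.2 ⟨h0, h1⟩)
      exact hyx ▸ hy
    have := hsum hy
    dsimp only [dir]
    split_ifs <;> lia
  have lt_move_iff {y : Fin 2 → ℕ} (hy : y ∈ A) :
      x 0 < (y + Pi.single (dir y) 1 : Fin 2 → ℕ) 0 ↔ x 0 < y 0 := by
    by_cases h : x 0 < y 0
    · simp [dir, h]
    · simpa [dir, h] using hlt hy
  refine card_le_card_of_injOn (fun y => y + Pi.single (dir y) 1) (fun y hy => ?_) ?_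
  · refine mem_boxShadow.2 ⟨add_single_mem_box (mem_boxLayer.1 (hA.1 hy)).1 ?_, y, hy, _, rfl⟩
    exact (Nat.cast_le.2 (hlt hy)).trans_lt (hxbox _)
  · intro y hy z hz heq
    have hdir : dir y = dir z := by
      have hside : x 0 < y 0 ↔ x 0 < z 0 := by
        rw [← lt_move_iff hy, ← lt_move_iff hz]
        exact iff_of_eq (congrArg (fun w : Fin 2 → ℕ => x 0 < w 0) heq)
      simp only [dir, hside]
    simpa [hdir] using heq

theorem shadowInequality_two : ShadowInequality 2 := by
  intro a ha d A S hA hS hcard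
  rcases hA.eq_or_ssubset with rfl | hssub
  · rw [eq_of_subset_of_card_le hS.1 hcard.ge]
  rcases A.eq_empty_or_nonempty with rfl | hne
  · rw [card_eq_zero.1 hcard]
  have hSimage : #(S.image (· + Pi.single 1 1)) = #A :=
    (card_image_of_injective _ (add_left_injective _)).trans hcard
  have hsub := boxShadow_subset_of_isTopSegment hS
  by_cases hd : ((d + 1 : ℕ) : ℕ∞) < a 0
  · calc #(boxShadow a S)
      _ ≤ #A + 1 := hSimage ▸ (card_le_card hsub).trans (card_insert_le _ _)
      _ ≤ #(boxShadow a A) := card_lt_card_boxShadow ha hd hA hne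
  · have hnotMem : Pi.single 0 (d + 1) ∉ boxShadow a S := fun h =>
      hd (by simpa using (mem_boxShadow.1 h).1 0)
    calc #(boxShadow a S)
      _ ≤ #A := hSimage ▸ card_le_card ((subset_insert_iff_of_notMem hnotMem).1 hsub)
      _ ≤ #(boxShadow a A) := card_le_card_boxShadow hssub

theorem shadowInequality : ∀ n, ShadowInequality n
  | 0 => shadowInequality_of_le_one zero_le_one
  | 1 => shadowInequality_of_le_one le_rfl
  | 2 => shadowInequality_two
  | n + 3 => (shadowInequality (n + 2)).succ

end ShadowInequality

section Lexification

open Finset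

variable {n d : ℕ} {a : Fin n → ℕ∞} {P : Set (Fin n → ℕ)}

theorem isUpperSet_of_add_single_mem (hP : ∀ w ∈ P, ∀ j, w + Pi.single j 1 ∈ P) :
    IsUpperSet P := by
  have add_single_mem {w : Fin n → ℕ} (hw : w ∈ P) (j : Fin n) (m : ℕ) :
      w + Pi.single j m ∈ P := by
    induction m with
    | zero => simpa using hw
    | succ m ih => simpa only [Pi.single_add, add_assoc] using hP _ ih j
  intro v w hvw hv
  obtain ⟨c, rfl⟩ := exists_add_of_le hvw
  suffices ∀ s : Finset (Fin n), v + ∑ i ∈ s, Pi.single i (c i) ∈ P by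
    simpa only [univ_sum_single] using this univ
  intro s
  induction s using Finset.cons_induction with
  | empty => simpa using hv
  | cons i s hi ih =>
    rw [sum_cons, add_left_comm, add_comm]
    exact add_single_mem ih i (c i)

open Classical in
/-- The lex-segment of the layer of degree `d` of `box a` with as many elements as `P` has there. -/
noncomputable def lexSegment (a : Fin n → ℕ∞) (P : Set (Fin n → ℕ)) (d : ℕ) :
    Finset (Fin n → ℕ) :=
  topSegment toLex (boxLayer a d) #{v ∈ boxLayer a d | v ∈ P}

open Classical in
theorem card_lexSegment : #(lexSegment a P d) = #{v ∈ boxLayer a d | v ∈ P} :=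
  card_topSegment toLex.injective (card_filter_le _ _)

theorem isTopSegment_lexSegment : IsTopSegment toLex (boxLayer a d) (lexSegment a P d) :=
  isTopSegment_topSegment

theorem boxShadow_lexSegment_subset (ha : Monotone a) (hP : IsUpperSet P) :
    boxShadow a (lexSegment a P d) ⊆ lexSegment a P (d + 1) := by
  classical
  refine (isTopSegment_boxShadow isTopSegment_lexSegment).subset_topSegment ?_
  refine (shadowInequality n ha (filter_subset (· ∈ P) _) isTopSegment_lexSegment
    card_lexSegment).trans (card_le_card fun w hw => ?_)
  obtain ⟨-, v, hv, j, rfl⟩ := mem_boxShadow.1 hw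
  exact mem_filter.2 ⟨boxShadow_subset (filter_subset _ _) hw,
    hP le_self_add (mem_filter.1 hv).2⟩

/-- The exponents of the lex-plus-powers ideal whose number of exponents in each degree agrees with
that of `P`: everything outside `box a`, and a lex-segment of each layer of `box a`. -/
def lexification (a : Fin n → ℕ∞) (P : Set (Fin n → ℕ)) : Set (Fin n → ℕ) :=
  {w | w ∈ box a → w ∈ lexSegment a P (∑ i, w i)}

theorem compl_box_subset_lexification : (box a)ᶜ ⊆ lexification a P :=
  fun _ hw hbox => absurd hbox hw

theorem mem_lexification_of_toLex_lt {v w : Fin n → ℕ} (hv : v ∈ lexification a P)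
    (hvbox : v ∈ box a) (hwbox : w ∈ box a) (hsum : ∑ i, v i = ∑ i, w i)
    (hlt : toLex v < toLex w) : w ∈ lexification a P := fun _ =>
  isTopSegment_lexSegment.2 (hsum ▸ hv hvbox) (mem_boxLayer.2 ⟨hwbox, rfl⟩) hlt

theorem isUpperSet_lexification (ha : Monotone a) (hP : IsUpperSet P) :
    IsUpperSet (lexification a P) := by
  refine isUpperSet_of_add_single_mem fun w hw j hbox => ?_
  rw [sum_add_single]
  exact boxShadow_lexSegment_subset ha hP
    (mem_boxShadow.2 ⟨hbox, w, hw (isLowerSet_box le_self_add hbox), j, rfl⟩)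

open Classical in
theorem filter_mem_lexification :
    {w ∈ boxLayer a d | w ∈ lexification a P} = lexSegment a P d := by
  ext w
  refine mem_filter.trans ⟨fun ⟨hw, hlex⟩ => ?_, fun hw => ⟨isTopSegment_lexSegment.1 hw, ?_⟩⟩
  · obtain ⟨hbox, rfl⟩ := mem_boxLayer.1 hw
    exact hlex hbox
  · obtain ⟨-, rfl⟩ := mem_boxLayer.1 (isTopSegment_lexSegment.1 hw)
    exact fun _ => hw

open Classical in
theorem ncard_setOf_mem_and_sum_eq (hP : (box a)ᶜ ⊆ P) (d : ℕ) :
    {w ∈ P | ∑ i, w i = d}.ncard =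
      #{w ∈ boxLayer a d | w ∈ P} + #{w ∈ piAntidiag univ d | w ∉ box a} := by
  have hset : {w ∈ P | ∑ i, w i = d} = ({w ∈ piAntidiag univ d | w ∈ P} : Finset (Fin n → ℕ)) := by
    ext w
    simp [and_comm]
  rw [hset, Set.ncard_coe_finset, ← card_filter_add_card_filter_not (· ∈ box a), filter_filter,
    filter_filter, boxLayer, filter_filter]
  congr 2
  · exact filter_congr fun w _ => and_comm
  · exact filter_congr fun w _ => and_iff_right_of_imp fun hw => hP hw

theorem ncard_lexification (hP : (box a)ᶜ ⊆ P) (d : ℕ) :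
    {w ∈ lexification a P | ∑ i, w i = d}.ncard = {w ∈ P | ∑ i, w i = d}.ncard := by
  rw [ncard_setOf_mem_and_sum_eq hP, ncard_setOf_mem_and_sum_eq compl_box_subset_lexification,
    filter_mem_lexification, card_lexSegment]

end Lexification

section PadTop

variable {n p : ℕ} {a : Fin p → ℕ}

/-- Extends the exponents of finitely many pure powers by `⊤`, that is, by no condition on the
remaining variables. -/
def padTop (n : ℕ) (a : Fin p → ℕ) (i : Fin n) : ℕ∞ :=
  if h : (i : ℕ) < p then a ⟨i, h⟩ else ⊤

theorem monotone_padTop (ha : Monotone a) : Monotone (padTop n a) := by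
  intro i j hij
  by_cases hj : (j : ℕ) < p
  · have hi : (i : ℕ) < p := lt_of_le_of_lt hij hj
    simpa [padTop, hi, hj] using ha (Fin.mk_le_mk.2 hij)
  · simp [padTop, hj]

theorem mem_box_padTop (hp : p ≤ n) {w : Fin n → ℕ} :
    w ∈ box (padTop n a) ↔ ∀ i, w (Fin.castLE hp i) < a i := by
  constructor
  · intro hw i
    simpa [padTop] using hw (Fin.castLE hp i)
  · intro hw i
    by_cases hi : (i : ℕ) < p
    · simpa [padTop, hi] using hw ⟨i, hi⟩
    · simp [padTop, hi]

end PadTop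

section LexPlusPowers

variable {n : ℕ}

theorem ncard_preimage_orderIsoFunOnFinite (P : Set (Fin n → ℕ)) (d : ℕ) :
    {u ∈ Finsupp.orderIsoFunOnFinite ⁻¹' P | u.degree = d}.ncard =
      {w ∈ P | ∑ i, w i = d}.ncard := by
  simp only [Finsupp.degree_eq_sum]
  exact Set.ncard_preimage_of_injective_subset_range Finsupp.orderIsoFunOnFinite.injective
    (s := {w ∈ P | ∑ i, w i = d}) fun w _ => Finsupp.orderIsoFunOnFinite.surjective w

theorem exists_isUpperSet_lexGT_mem {p : ℕ} (hp : p ≤ n) {a : Fin p → ℕ} (ha : Monotone a)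
    {H : Set (Fin n →₀ ℕ)} (hH : IsUpperSet H)
    (hpow : ∀ (i : Fin p) (u : Fin n →₀ ℕ), a i ≤ u (Fin.castLE hp i) → u ∈ H) :
    ∃ T : Set (Fin n →₀ ℕ), IsUpperSet T ∧
      (∀ (i : Fin p) (u : Fin n →₀ ℕ), a i ≤ u (Fin.castLE hp i) → u ∈ T) ∧
      (∀ d, {u ∈ T | u.degree = d}.ncard = {u ∈ H | u.degree = d}.ncard) ∧
      ∀ u v : Fin n →₀ ℕ, ∑ i, u i = ∑ i, v i → (∀ i, u (Fin.castLE hp i) < a i) →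
        (∀ i, v (Fin.castLE hp i) < a i) → lexGT u v → v ∈ T → u ∈ T := by
  let P : Set (Fin n → ℕ) := Finsupp.orderIsoFunOnFinite.symm ⁻¹' H
  have hP : IsUpperSet P := hH.preimage (OrderIso.monotone _)
  have hbox : (box (padTop n a))ᶜ ⊆ P := fun w hw => by
    obtain ⟨i, hi⟩ := not_forall.1 (mt (mem_box_padTop hp).2 hw)
    exact hpow i _ (not_lt.1 hi)
  have hT : IsUpperSet (lexification (padTop n a) P) :=
    isUpperSet_lexification (monotone_padTop ha) hP
  refine ⟨Finsupp.orderIsoFunOnFinite ⁻¹' lexification (padTop n a) P,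
    hT.preimage (OrderIso.monotone _), fun i u hu => ?_, fun d => ?_,
    fun u v hsum hu hv ⟨i, hlt, heq⟩ hvT => ?_⟩
  · exact compl_box_subset_lexification fun h => hu.not_gt ((mem_box_padTop hp).1 h i)
  · rw [ncard_preimage_orderIsoFunOnFinite, ncard_lexification hbox,
      ← ncard_preimage_orderIsoFunOnFinite]
    simp [P]
  · exact mem_lexification_of_toLex_lt hvT ((mem_box_padTop hp).2 hv) ((mem_box_padTop hp).2 hu)
      hsum.symm ⟨i, fun j hj => (heq j hj).symm, hlt⟩

end LexPlusPowers

section LeadingExponents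

open Module

variable {σ K : Type*} [Field K] (m : MonomialOrder σ) {W : Submodule K (MvPolynomial σ K)}
  {I : Ideal (MvPolynomial σ K)}

/-- The exponents of the leading monomials of the nonzero elements of a space of polynomials. -/
def leadingExponents (W : Submodule K (MvPolynomial σ K)) : Set (σ →₀ ℕ) :=
  m.degree '' {f | f ∈ W ∧ f ≠ 0}

theorem linearIndependent_of_degree_injective {ι : Type*} {f : ι → MvPolynomial σ K}
    (hf : ∀ i, f i ≠ 0) (hinj : Function.Injective fun i => m.degree (f i)) :
    LinearIndependent K f := by
  classical
  rw [linearIndependent_iff']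
  by_contra!
  obtain ⟨s, c, hsum, hne⟩ := this
  have hsupp : ({i ∈ s | c i ≠ 0} : Finset ι).Nonempty := by simpa [Finset.Nonempty] using hne
  obtain ⟨i, hi, hmax⟩ := Finset.exists_max_image _ (fun j => m.toSyn (m.degree (f j))) hsupp
  obtain ⟨his, hci⟩ := Finset.mem_filter.1 hi
  have hcoeff : c i * m.leadingCoeff (f i) = 0 := by
    rw [← coeff_zero (m.degree (f i)), ← hsum, coeff_sum, Finset.sum_eq_single_of_mem i his]
    · rw [coeff_smul, smul_eq_mul, MonomialOrder.leadingCoeff]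
    intro j hjs hji
    rcases eq_or_ne (c j) 0 with hcj | hcj
    · rw [hcj, zero_smul, coeff_zero]
    have hlt : m.toSyn (m.degree (f j)) < m.toSyn (m.degree (f i)) :=
      (hmax j (Finset.mem_filter.2 ⟨hjs, hcj⟩)).lt_of_ne fun h =>
        hji (hinj (m.toSyn.injective h))
    rw [coeff_smul, m.coeff_eq_zero_of_lt hlt, smul_zero]
  exact mul_ne_zero hci (m.leadingCoeff_ne_zero_iff.2 (hf i)) hcoeff

theorem le_span_range_of_forall_exists_degree_eq {ι : Type*} {g : ι → MvPolynomial σ K}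
    (hgW : ∀ i, g i ∈ W) (hg : ∀ f ∈ W, f ≠ 0 → ∃ i, g i ≠ 0 ∧ m.degree (g i) = m.degree f) :
    W ≤ Submodule.span K (Set.range g) := by
  intro f hf
  induction hs : m.toSyn (m.degree f) using WellFoundedLT.induction generalizing f with
  | _ s ih =>
  subst hs
  rcases eq_or_ne f 0 with rfl | hf0
  · exact zero_mem _
  obtain ⟨i, hgi0, hdeg⟩ := hg f hf hf0
  have hspan : ∀ b : K, b • g i ∈ Submodule.span K (Set.range g) := fun b =>
    Submodule.smul_mem _ b (Submodule.subset_span (Set.mem_range_self i))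
  set b : K := m.leadingCoeff f / m.leadingCoeff (g i) with hb
  rw [← sub_add_cancel f (b • g i)]
  refine add_mem ?_ (hspan b)
  rcases eq_or_ne (f - b • g i) 0 with h0 | h0
  · exact h0 ▸ zero_mem _
  refine ih _ (lt_of_le_of_ne ?_ fun heq => ?_) (W.sub_mem hf (W.smul_mem b (hgW i))) rfl
  · refine m.degree_sub_le.trans (sup_le le_rfl ?_)
    exact m.degree_smul_le.trans_eq (congrArg m.toSyn hdeg)
  · refine m.leadingCoeff_ne_zero_iff.2 h0 ?_
    have hlead : coeff (m.degree f) (g i) = m.leadingCoeff (g i) := hdeg ▸ rfl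
    rw [MonomialOrder.leadingCoeff, m.toSyn.injective heq, coeff_sub, coeff_smul, hlead,
      smul_eq_mul, hb, div_mul_cancel₀ _ (m.leadingCoeff_ne_zero_iff.2 hgi0)]
    exact sub_self _

theorem finrank_eq_ncard_leadingExponents (W : Submodule K (MvPolynomial σ K)) :
    finrank K W = (leadingExponents m W).ncard := by
  choose g hg hdeg using fun u : leadingExponents m W => u.2
  have hli : LinearIndependent K g :=
    linearIndependent_of_degree_injective m (fun u => (hg u).2) fun u v huv =>
      Subtype.ext ((hdeg u).symm.trans (huv.trans (hdeg v)))
  have hspan : Submodule.span K (Set.range g) = W := by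
    refine le_antisymm (Submodule.span_le.2 (Set.range_subset_iff.2 fun u => (hg u).1)) ?_
    refine le_span_range_of_forall_exists_degree_eq m (fun u => (hg u).1) fun f hf hf0 => ?_
    exact ⟨⟨_, f, ⟨hf, hf0⟩, rfl⟩, (hg _).2, hdeg _⟩
  rw [← Nat.card_coe_set_eq, ← finrank_eq_nat_card_basis (Basis.span hli), hspan]

/-- The exponents of the leading monomials of the nonzero forms in an ideal. For a homogeneous
ideal these are all the exponents of its initial ideal. -/
def homogLeadingExponents (I : Ideal (MvPolynomial σ K)) : Set (σ →₀ ℕ) :=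
  {u | u ∈ leadingExponents m (I.restrictScalars K ⊓ homogeneousSubmodule σ K u.degree)}

variable {m}

theorem degree_eq_of_mem_leadingExponents {d : ℕ} {u : σ →₀ ℕ}
    (hW : W ≤ homogeneousSubmodule σ K d) (hu : u ∈ leadingExponents m W) : u.degree = d := by
  obtain ⟨f, ⟨hf, hf0⟩, rfl⟩ := hu
  rw [Finsupp.degree_eq_weight_one]
  exact hW hf (m.leadingCoeff_ne_zero_iff.2 hf0)

theorem setOf_mem_homogLeadingExponents_and_degree_eq (d : ℕ) :
    {u ∈ homogLeadingExponents m I | u.degree = d} =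
      leadingExponents m (I.restrictScalars K ⊓ homogeneousSubmodule σ K d) := by
  ext u
  constructor
  · rintro ⟨hu, rfl⟩
    exact hu
  · intro hu
    obtain rfl := degree_eq_of_mem_leadingExponents inf_le_right hu
    exact ⟨hu, rfl⟩

theorem mem_homogLeadingExponents_of_monomial_mem {u : σ →₀ ℕ} (hu : monomial u (1 : K) ∈ I) :
    u ∈ homogLeadingExponents m I := by
  classical
  refine ⟨monomial u 1, ⟨⟨hu, isHomogeneous_monomial 1 rfl⟩, by simp⟩, ?_⟩
  rw [m.degree_monomial, if_neg one_ne_zero]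

theorem isUpperSet_homogLeadingExponents : IsUpperSet (homogLeadingExponents m I) := by
  classical
  rintro u v huv ⟨f, ⟨⟨hfI, hfhom⟩, hf0⟩, hdeg⟩
  obtain ⟨c, rfl⟩ := exists_add_of_le huv
  have hc0 : (monomial c 1 : MvPolynomial σ K) ≠ 0 := by simp
  refine ⟨monomial c 1 * f, ⟨⟨I.mul_mem_left _ hfI, ?_⟩, mul_ne_zero hc0 hf0⟩, ?_⟩
  · rw [add_comm u, map_add]
    exact (isHomogeneous_monomial 1 rfl).mul hfhom
  · rw [m.degree_mul hc0 hf0, m.degree_monomial, if_neg one_ne_zero, hdeg, add_comm]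

end LeadingExponents

section RestrictSupport

variable {σ R : Type*}

theorem restrictSupportIdeal_eq_span [CommSemiring R] {T : Set (σ →₀ ℕ)} (hT : IsUpperSet T) :
    restrictSupportIdeal R T hT = Ideal.span ((fun u => monomial u (1 : R)) '' T) := by
  refine le_antisymm (fun f hf => ?_) (Ideal.span_le.2 ?_)
  · exact mem_ideal_span_monomial_image.2 fun u hu => ⟨u, hf hu, le_rfl⟩
  · rintro - ⟨u, hu, rfl⟩
    exact (monomial_mem_restrictSupport R).2 (Or.inl hu)

theorem restrictSupport_inf_homogeneousSubmodule [CommSemiring R] (T : Set (σ →₀ ℕ)) (d : ℕ) :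
    restrictSupport R T ⊓ homogeneousSubmodule σ R d =
      restrictSupport R {u ∈ T | u.degree = d} := by
  rw [homogeneousSubmodule_eq_finsupp_supported]
  ext f
  exact Set.subset_inter_iff.symm

theorem finrank_restrictSupport [CommRing R] [Nontrivial R] (T : Set (σ →₀ ℕ)) :
    Module.finrank R (restrictSupport R T) = T.ncard :=
  Module.finrank_eq_nat_card_basis (basisRestrictSupport R T)

end RestrictSupport

section HilbertFunction

variable {K : Type} [Field K] {n : ℕ} {I : Ideal (MvPolynomial (Fin n) K)}

theorem hilb_eq_ncard_homogLeadingExponents (m : MonomialOrder (Fin n)) (d : ℕ) :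
    hilb I d = {u ∈ homogLeadingExponents m I | u.degree = d}.ncard := by
  rw [setOf_mem_homogLeadingExponents_and_degree_eq]
  exact finrank_eq_ncard_leadingExponents m _

theorem hilb_restrictSupportIdeal {T : Set (Fin n →₀ ℕ)} (hT : IsUpperSet T) (d : ℕ) :
    hilb (restrictSupportIdeal K T hT) d = {u ∈ T | u.degree = d}.ncard := by
  rw [hilb, restrictScalars_restrictSupportIdeal, restrictSupport_inf_homogeneousSubmodule,
    finrank_restrictSupport]

theorem monomial_mem_restrictSupportIdeal {T : Set (Fin n →₀ ℕ)} {hT : IsUpperSet T}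
    {u : Fin n →₀ ℕ} : monomial u (1 : K) ∈ restrictSupportIdeal K T hT ↔ u ∈ T :=
  (monomial_mem_restrictSupport K).trans (or_iff_left one_ne_zero)

theorem monomial_mem_of_X_pow_mem {j : Fin n} {e : ℕ} (hpow : X j ^ e ∈ I) {u : Fin n →₀ ℕ}
    (hu : e ≤ u j) : monomial u (1 : K) ∈ I := by
  rw [X_pow_eq_monomial] at hpow
  refine I.mem_of_dvd (monomial_dvd_monomial.2 ⟨Or.inr ?_, dvd_rfl⟩) hpow
  exact Finsupp.single_le_iff.2 hu

end HilbertFunction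

end ClementsLindstrom

open ClementsLindstrom in
theorem stmt18_general {K : Type} [Field K] {n p : ℕ} (hp : p ≤ n) (a : Fin p → ℕ)
    (hmono : Monotone a) (I : Ideal (MvPolynomial (Fin n) K))
    (hpow : ∀ i : Fin p, (X (Fin.castLE hp i) : MvPolynomial (Fin n) K) ^ a i ∈ I) :
    ∃ L : Ideal (MvPolynomial (Fin n) K), IsMonomialIdeal L ∧
      (∀ i : Fin p, (X (Fin.castLE hp i) : MvPolynomial (Fin n) K) ^ a i ∈ L) ∧
      (∀ d : ℕ, hilb I d = hilb L d) ∧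
      ∀ u v : Fin n →₀ ℕ, (∑ i, u i) = (∑ i, v i) →
        (∀ i : Fin p, u (Fin.castLE hp i) < a i) →
        (∀ i : Fin p, v (Fin.castLE hp i) < a i) →
        monomial u (1 : K) ∉ L → lexGT u v → monomial v (1 : K) ∉ L := by
  obtain ⟨T, hT, hpowT, hcard, hlex⟩ := exists_isUpperSet_lexGT_mem hp hmono
    (isUpperSet_homogLeadingExponents (m := MonomialOrder.lex) (I := I)) fun i u hu =>
      mem_homogLeadingExponents_of_monomial_mem (monomial_mem_of_X_pow_mem (hpow i) hu)
  refine ⟨restrictSupportIdeal K T hT, ⟨T, restrictSupportIdeal_eq_span hT⟩, fun i => ?_,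
    fun d => ?_, fun u v hsum hu hv huL huv hvL => huL ?_⟩
  · rw [X_pow_eq_monomial, monomial_mem_restrictSupportIdeal]
    exact hpowT i _ (by simp)
  · rw [hilb_eq_ncard_homogLeadingExponents MonomialOrder.lex, hilb_restrictSupportIdeal, hcard]
  · rw [monomial_mem_restrictSupportIdeal] at hvL ⊢
    exact hlex u v hsum hu hv huv hvL

/-- Clements–Lindström, partial pure powers: for every homogeneous ideal `I`
containing `x_1^{a_1},...,x_p^{a_p}` there is a monomial ideal `L` containing these pure
powers, with the same Hilbert function as `I`, whose standard monomials in each degree are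
the lexicographically smallest monomials of that degree not divisible by any `x_i^{a_i}`. -/
theorem stmt18 {K : Type} [Field K] {n p : ℕ} (hp : p ≤ n) (a : Fin p → ℕ)
    (ha2 : ∀ i, 2 ≤ a i) (hmono : Monotone a)
    (I : Ideal (MvPolynomial (Fin n) K)) (hI : IsHomog I)
    (hpow : ∀ i : Fin p, (X (Fin.castLE hp i) : MvPolynomial (Fin n) K) ^ a i ∈ I) :
    ∃ L : Ideal (MvPolynomial (Fin n) K), IsMonomialIdeal L ∧
      (∀ i : Fin p, (X (Fin.castLE hp i) : MvPolynomial (Fin n) K) ^ a i ∈ L) ∧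
      (∀ d : ℕ, hilb I d = hilb L d) ∧
      ∀ u v : Fin n →₀ ℕ, (∑ i, u i) = (∑ i, v i) →
        (∀ i : Fin p, u (Fin.castLE hp i) < a i) →
        (∀ i : Fin p, v (Fin.castLE hp i) < a i) →
        monomial u (1 : K) ∉ L → lexGT u v → monomial v (1 : K) ∉ L :=
  stmt18_general hp a hmono I hpow
end
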